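/- arXiv:2405.19809 — 10 statements merged into one kernel-verified Lean document; each statement's English description precedes it below -/
import Mathlib

section
/- Let E be a finite-dimensional real inner product space, F : E → ℝ a differentiable function and L > 0. Then the gradient of F is L-Lipschitz if and only if for all x, y ∈ E one has F(x) + ⟨∇F(x), y − x⟩ − (L/2)‖x − y‖² ≤ F(y) ≤ F(x) + ⟨∇F(x), y − x⟩ + (L/2)‖x − y‖². (In particular the two-sided quadratic bound implies the Lipschitz gradient property without any convexity assumption.) -/
open scoped RealInnerProductSpace

/-!
A Lipschitz derivative gives the quadratic bound by integrating it along a segment. Conversely,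
evaluate the bound at the two points `m + u` and `m - u`, where `m` is the midpoint of `x` and `y`:
subtracting shows that `f (m + u) - f (m - u)` is close to both `2 • f' x u` and `2 • f' y u`, and
the parallelogram law makes the errors sum to `2 * L * (‖(x - y) / 2‖ ^ 2 + ‖u‖ ^ 2)`. Choosing
`‖u‖ = ‖(x - y) / 2‖` gives the sharp Lipschitz constant `L`.
-/

open Set

section DescentLemma

variable {E G : Type*} [NormedAddCommGroup E] [NormedSpace ℝ E] [NormedAddCommGroup G]
  [NormedSpace ℝ G]

theorem norm_image_sub_le_of_norm_deriv_le_mul_sub {f f' : ℝ → G} {a b C : ℝ}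
    (hf : ∀ t ∈ Icc a b, HasDerivWithinAt f (f' t) (Icc a b) t)
    (bound : ∀ t ∈ Ico a b, ‖f' t‖ ≤ C * (t - a)) :
    ∀ t ∈ Icc a b, ‖f t - f a‖ ≤ C / 2 * (t - a) ^ 2 := by
  have hderiv : ∀ t ∈ Ico a b, HasDerivWithinAt (fun t ↦ f t - f a) (f' t) (Ici t) t :=
    fun t ht ↦ ((hf t (Ico_subset_Icc_self ht)).mono_of_mem_nhdsWithin
      (Icc_mem_nhdsGE_of_mem ht)).sub_const _
  have hquad (t : ℝ) : HasDerivAt (fun t ↦ C / 2 * (t - a) ^ 2) (C * (t - a)) t :=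
    ((((hasDerivAt_id t).sub_const a).pow 2).const_mul (C / 2)).congr_deriv (by
      simp only [id_eq, Nat.cast_ofNat, Nat.add_one_sub_one, pow_one, mul_one]
      ring)
  exact image_norm_le_of_norm_deriv_right_le_deriv_boundary
    (fun t ht ↦ ((hf t ht).sub_const _).continuousWithinAt) hderiv (by simp) hquad bound

theorem norm_image_sub_sub_le_of_norm_hasFDerivWithinAt_sub_le {f : E → G} {f' : E → E →L[ℝ] G}
    {s : Set E} {x y : E} {L : ℝ} (hf : ∀ z ∈ s, HasFDerivWithinAt f (f' z) s z)
    (bound : ∀ z ∈ s, ‖f' z - f' x‖ ≤ L * ‖z - x‖) (hs : Convex ℝ s) (hx : x ∈ s) (hy : y ∈ s) :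
    ‖f y - f x - f' x (y - x)‖ ≤ L / 2 * ‖y - x‖ ^ 2 := by
  let γ : ℝ → E := AffineMap.lineMap x y
  have hγ : MapsTo γ (Icc 0 1) s := hs.mapsTo_lineMap hx hy
  have hderiv : ∀ t ∈ Icc (0 : ℝ) 1, HasDerivWithinAt (fun t ↦ f (γ t) - f' x (γ t))
      ((f' (γ t) - f' x) (y - x)) (Icc 0 1) t := fun t ht ↦
    ((hf (γ t) (hγ ht)).sub (f' x).hasFDerivWithinAt).comp_hasDerivWithinAt t
      AffineMap.hasDerivWithinAt_lineMap hγ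
  have hbound : ∀ t ∈ Ico (0 : ℝ) 1,
      ‖(f' (γ t) - f' x) (y - x)‖ ≤ L * ‖y - x‖ ^ 2 * (t - 0) := fun t ht ↦ by
    have hdist : ‖γ t - x‖ = t * ‖y - x‖ := by
      simp [γ, AffineMap.lineMap_apply, norm_smul, abs_of_nonneg ht.1]
    calc ‖(f' (γ t) - f' x) (y - x)‖ ≤ L * ‖γ t - x‖ * ‖y - x‖ :=
          (f' (γ t) - f' x).le_of_opNorm_le (bound _ (hγ (Ico_subset_Icc_self ht))) _
      _ = L * ‖y - x‖ ^ 2 * (t - 0) := by rw [hdist]; ring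
  calc ‖f y - f x - f' x (y - x)‖ = ‖f (γ 1) - f' x (γ 1) - (f (γ 0) - f' x (γ 0))‖ := by
        simp only [γ, AffineMap.lineMap_apply_one, AffineMap.lineMap_apply_zero, map_sub]
        congr 1
        abel
    _ ≤ L * ‖y - x‖ ^ 2 / 2 * (1 - 0) ^ 2 :=
        norm_image_sub_le_of_norm_deriv_le_mul_sub hderiv hbound 1 (right_mem_Icc.2 zero_le_one)
    _ = L / 2 * ‖y - x‖ ^ 2 := by ring

end DescentLemma

section QuadraticBound

variable {E G : Type*} [NormedAddCommGroup E] [InnerProductSpace ℝ E] [NormedAddCommGroup G]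
  [NormedSpace ℝ G] {f : E → G} {L : ℝ}

theorem norm_image_add_sub_image_sub_sub_le {φ : E →L[ℝ] G} {x : E}
    (h : ∀ z, ‖f z - f x - φ (z - x)‖ ≤ L / 2 * ‖z - x‖ ^ 2) (m u : E) :
    ‖f (m + u) - f (m - u) - (2 : ℝ) • φ u‖ ≤ L * (‖m - x‖ ^ 2 + ‖u‖ ^ 2) := by
  calc ‖f (m + u) - f (m - u) - (2 : ℝ) • φ u‖
      = ‖(f (m + u) - f x - φ (m + u - x)) - (f (m - u) - f x - φ (m - u - x))‖ := by
        simp only [map_add, map_sub]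
        congr 1
        module
    _ ≤ L / 2 * ‖m + u - x‖ ^ 2 + L / 2 * ‖m - u - x‖ ^ 2 := norm_sub_le_of_le (h _) (h _)
    _ = L / 2 * (‖m - x + u‖ ^ 2 + ‖m - x - u‖ ^ 2) := by
        rw [add_sub_right_comm, sub_right_comm, mul_add]
    _ = L * (‖m - x‖ ^ 2 + ‖u‖ ^ 2) := by
        rw [parallelogram_law_with_norm ℝ]
        ring

theorem norm_sub_apply_le_of_norm_image_sub_sub_le {φ ψ : E →L[ℝ] G} {x y : E}
    (hx : ∀ z, ‖f z - f x - φ (z - x)‖ ≤ L / 2 * ‖z - x‖ ^ 2)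
    (hy : ∀ z, ‖f z - f y - ψ (z - y)‖ ≤ L / 2 * ‖z - y‖ ^ 2) (u : E) :
    ‖(φ - ψ) u‖ ≤ L * ((‖x - y‖ / 2) ^ 2 + ‖u‖ ^ 2) := by
  let m := midpoint ℝ x y
  have hmx : ‖m - x‖ = ‖x - y‖ / 2 := by
    simp [m, midpoint_sub_left, norm_smul, norm_sub_rev y x, div_eq_inv_mul]
  have hmy : ‖m - y‖ = ‖x - y‖ / 2 := by
    simp [m, midpoint_sub_right, norm_smul, div_eq_inv_mul]
  have htwo : 2 * ‖(φ - ψ) u‖ ≤ 2 * (L * ((‖x - y‖ / 2) ^ 2 + ‖u‖ ^ 2)) := by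
    calc 2 * ‖(φ - ψ) u‖ = ‖(2 : ℝ) • (φ - ψ) u‖ := by simp [norm_smul]
      _ = ‖(f (m + u) - f (m - u) - (2 : ℝ) • ψ u) -
            (f (m + u) - f (m - u) - (2 : ℝ) • φ u)‖ := by
          rw [sub_sub_sub_cancel_left, ← smul_sub, sub_apply]
      _ ≤ L * (‖m - y‖ ^ 2 + ‖u‖ ^ 2) + L * (‖m - x‖ ^ 2 + ‖u‖ ^ 2) :=
          norm_sub_le_of_le (norm_image_add_sub_image_sub_sub_le hy m u)
            (norm_image_add_sub_image_sub_sub_le hx m u)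
      _ = 2 * (L * ((‖x - y‖ / 2) ^ 2 + ‖u‖ ^ 2)) := by rw [hmx, hmy]; ring
  exact le_of_mul_le_mul_left htwo two_pos

theorem norm_sub_le_of_norm_image_sub_sub_le {f' : E → E →L[ℝ] G}
    (h : ∀ x y, ‖f y - f x - f' x (y - x)‖ ≤ L / 2 * ‖y - x‖ ^ 2) (x y : E) :
    ‖f' x - f' y‖ ≤ L * ‖x - y‖ := by
  rcases eq_or_ne x y with rfl | hxy
  · simp
  have hpos : 0 < ‖x - y‖ := norm_sub_pos_iff.2 hxy
  have hL : 0 ≤ L := by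
    have := (norm_nonneg _).trans (h y x)
    linarith [nonneg_of_mul_nonneg_left this (by positivity)]
  refine ContinuousLinearMap.opNorm_le_of_unit_norm (by positivity) fun e he ↦ ?_
  have hscaled := norm_sub_apply_le_of_norm_image_sub_sub_le (h x) (h y) ((‖x - y‖ / 2) • e)
  have hnorm : ‖(‖x - y‖ / 2) • e‖ = ‖x - y‖ / 2 := by simp [norm_smul, he]
  rw [hnorm, map_smul, norm_smul, Real.norm_of_nonneg (by positivity)] at hscaled
  refine le_of_mul_le_mul_left (hscaled.trans_eq ?_) (half_pos hpos)
  ring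

theorem stmt_0_general {f' : E → E →L[ℝ] G} (hf : ∀ x, HasFDerivAt f (f' x) x) :
    (∀ x y, ‖f' x - f' y‖ ≤ L * ‖x - y‖) ↔
      ∀ x y, ‖f y - f x - f' x (y - x)‖ ≤ L / 2 * ‖x - y‖ ^ 2 := by
  constructor <;> intro h x y
  · rw [norm_sub_rev x y]
    exact norm_image_sub_sub_le_of_norm_hasFDerivWithinAt_sub_le
      (fun z _ ↦ (hf z).hasFDerivWithinAt) (fun z _ ↦ h z x) convex_univ (mem_univ x) (mem_univ y)
  · exact norm_sub_le_of_norm_image_sub_sub_le (fun x y ↦ norm_sub_rev x y ▸ h x y) x y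

end QuadraticBound

theorem norm_gradient_sub_gradient {𝕜 E : Type*} [RCLike 𝕜] [NormedAddCommGroup E]
    [InnerProductSpace 𝕜 E] [CompleteSpace E] (f g : E → 𝕜) (x y : E) :
    ‖gradient f x - gradient g y‖ = ‖fderiv 𝕜 f x - fderiv 𝕜 g y‖ := by
  rw [gradient, gradient, ← map_sub, LinearIsometryEquiv.norm_map]

theorem abs_sub_sub_le_iff {R : Type*} [AddCommGroup R] [LinearOrder R] [IsOrderedAddMonoid R]
    {a b c r : R} : |b - a - c| ≤ r ↔ a + c - r ≤ b ∧ b ≤ a + c + r := by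
  rw [sub_sub, abs_sub_comm, mem_Icc_iff_abs_le, mem_Icc]

/-- For a differentiable `F : E → ℝ` on a finite-dimensional real inner
product space and `L > 0`, the gradient of `F` is `L`-Lipschitz iff `F` satisfies the
two-sided quadratic bound
`F x + ⟪∇F x, y - x⟫ - L/2 ‖x-y‖² ≤ F y ≤ F x + ⟪∇F x, y - x⟫ + L/2 ‖x-y‖²`. -/
theorem stmt_0 {E : Type*} [NormedAddCommGroup E] [InnerProductSpace ℝ E]
    [FiniteDimensional ℝ E]
    (F : E → ℝ) (hF : Differentiable ℝ F) (L : ℝ) (hL : 0 < L) :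
    (∀ x y : E, ‖gradient F x - gradient F y‖ ≤ L * ‖x - y‖) ↔
    (∀ x y : E,
      F x + ⟪gradient F x, y - x⟫ - L / 2 * ‖x - y‖ ^ 2 ≤ F y ∧
      F y ≤ F x + ⟪gradient F x, y - x⟫ + L / 2 * ‖x - y‖ ^ 2) := by
  simp only [norm_gradient_sub_gradient, inner_gradient_left, ← abs_sub_sub_le_iff,
    ← Real.norm_eq_abs]
  exact stmt_0_general fun x ↦ (hF x).hasFDerivAt
end

section
/- Let F : E → ℝ be L-smooth and (γ,μ)-strongly quasar convex with respect to its minimizer x*, where 0 < μ ≤ L and γ ∈ (0,1]. Let 0 < s ≤ 1/L and let (x_n) be generated by gradient descent x_{n+1} = x_n − s∇F(x_n) from any x₀. Then for all n ∈ ℕ, F(x_n) − F(x*) ≤ (2/γ)(1 − γμs)ⁿ (F(x₀) − F(x*)). -/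
open scoped RealInnerProductSpace

/-!
The energy `F x - F x⋆ + μ / 2 * ‖x - x⋆‖ ^ 2` contracts by the factor `1 - γ μ s` at each gradient
step: quasar convexity at `x` bounds `γ` times the energy by `⟪∇F x, x - x⋆⟫`, and `2 s` times this
inner product is the first-order decrease of `‖x - x⋆‖ ^ 2`; the second-order term
`s ^ 2 * ‖∇F x‖ ^ 2` is absorbed by the descent lemma. The initial energy is at most `2 / γ` times
the gap `F x₀ - F x⋆`: along a ray from `x⋆` quasar convexity is the differential inequality
`γ φ + γ μ ‖v‖ ^ 2 t ^ 2 / 2 ≤ t φ'` for the gap `φ t = F (x⋆ + t v) - F x⋆`, and integrating it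
gives quadratic growth.
-/

section RayInequality

/-- If `h` solves `γ h ≤ t h'`, then `t ^ (-γ)` is an integrating factor. -/
lemma monotoneOn_rpow_neg_mul {h h' : ℝ → ℝ} {γ : ℝ} (hd : ∀ t, 0 < t → HasDerivAt h (h' t) t)
    (hle : ∀ t, 0 < t → γ * h t ≤ t * h' t) :
    MonotoneOn (fun t : ℝ ↦ t ^ (-γ) * h t) (Set.Ioi 0) := by
  have hderiv : ∀ t, 0 < t → HasDerivAt (fun t : ℝ ↦ t ^ (-γ) * h t)
      (t ^ (-γ - 1) * (t * h' t - γ * h t)) t := by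
    intro t ht
    have hpow : t ^ (-γ) = t ^ (-γ - 1) * t := by
      rw [← Real.rpow_add_one ht.ne', sub_add_cancel]
    refine ((Real.hasDerivAt_rpow_const (p := -γ) (Or.inl ht.ne')).mul (hd t ht)).congr_deriv ?_
    rw [hpow]
    ring
  refine monotoneOn_of_hasDerivWithinAt_nonneg (convex_Ioi 0)
    (fun t ht ↦ (hderiv t ht).continuousAt.continuousWithinAt)
    (fun t ht ↦ (hderiv t (interior_subset ht)).hasDerivWithinAt) fun t ht ↦ ?_
  have ht : 0 < t := interior_subset ht
  exact mul_nonneg (Real.rpow_nonneg ht.le _) (sub_nonneg.2 (hle t ht))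

lemma nonneg_of_mul_le_mul_deriv {h h' : ℝ → ℝ} {γ p C : ℝ} (hp : γ < p)
    (hd : ∀ t, 0 < t → HasDerivAt h (h' t) t) (hle : ∀ t, 0 < t → γ * h t ≤ t * h' t)
    (hlower : ∀ t, 0 < t → -(C * t ^ p) ≤ h t) {T : ℝ} (hT : 0 < T) : 0 ≤ h T := by
  have hlim : Filter.Tendsto (fun t : ℝ ↦ -(C * t ^ (p - γ))) (nhdsWithin 0 (Set.Ioi 0))
      (nhds 0) := by
    have hcont : Continuous fun t : ℝ ↦ -(C * t ^ (p - γ)) :=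
      ((Real.continuous_rpow_const (sub_pos.2 hp).le).const_mul C).neg
    simpa [Real.zero_rpow (sub_pos.2 hp).ne'] using (hcont.tendsto 0).mono_left nhdsWithin_le_nhds
  have hscaled : 0 ≤ T ^ (-γ) * h T := by
    refine le_of_tendsto hlim ?_
    filter_upwards [Ioc_mem_nhdsGT hT] with t ⟨ht, htT⟩
    calc -(C * t ^ (p - γ)) = t ^ (-γ) * -(C * t ^ p) := by
          rw [sub_eq_neg_add, Real.rpow_add ht]; ring
      _ ≤ t ^ (-γ) * h t := mul_le_mul_of_nonneg_left (hlower t ht) (Real.rpow_nonneg ht.le _)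
      _ ≤ T ^ (-γ) * h T := monotoneOn_rpow_neg_mul hd hle ht hT htT
  exact nonneg_of_mul_nonneg_right hscaled (Real.rpow_pos_of_pos hT _)

end RayInequality

section DescentLemma

lemma hasDerivAt_comp_add_smul {𝕜 V W : Type*} [NontriviallyNormedField 𝕜]
    [NormedAddCommGroup V] [NormedSpace 𝕜 V] [NormedAddCommGroup W] [NormedSpace 𝕜 W]
    {f : V → W} {x v : V} {t : 𝕜} (hf : DifferentiableAt 𝕜 f (x + t • v)) :
    HasDerivAt (fun r : 𝕜 ↦ f (x + r • v)) (fderiv 𝕜 f (x + t • v) v) t := by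
  have hline : HasDerivAt (fun r : 𝕜 ↦ x + r • v) v t := by
    simpa using ((hasDerivAt_id t).smul_const v).const_add x
  exact hf.hasFDerivAt.comp_hasDerivAt t hline

lemma norm_sub_sub_fderiv_le_of_lipschitz {V W : Type*} [NormedAddCommGroup V] [NormedSpace ℝ V]
    [NormedAddCommGroup W] [NormedSpace ℝ W] {f : V → W} (hf : Differentiable ℝ f) {L : ℝ} {x : V}
    (hLip : ∀ y, ‖fderiv ℝ f y - fderiv ℝ f x‖ ≤ L * ‖y - x‖) (v : V) :
    ‖f (x + v) - f x - fderiv ℝ f x v‖ ≤ L / 2 * ‖v‖ ^ 2 := by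
  have hremainder (t : ℝ) : HasDerivAt (fun r : ℝ ↦ f (x + r • v) - f x - r • fderiv ℝ f x v)
      (fderiv ℝ f (x + t • v) v - fderiv ℝ f x v) t :=
    (((hasDerivAt_comp_add_smul (hf _)).sub_const (f x)).sub
      ((hasDerivAt_id t).smul_const (fderiv ℝ f x v))).congr_deriv (by rw [one_smul])
  have hbound (t : ℝ) : HasDerivAt (fun r : ℝ ↦ L / 2 * ‖v‖ ^ 2 * r ^ 2) (L * ‖v‖ ^ 2 * t) t :=
    ((hasDerivAt_pow 2 t).const_mul (L / 2 * ‖v‖ ^ 2)).congr_deriv (by push_cast; ring)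
  have hderiv_le : ∀ t ∈ Set.Ico (0 : ℝ) 1,
      ‖fderiv ℝ f (x + t • v) v - fderiv ℝ f x v‖ ≤ L * ‖v‖ ^ 2 * t := by
    intro t ht
    calc ‖fderiv ℝ f (x + t • v) v - fderiv ℝ f x v‖
        ≤ ‖fderiv ℝ f (x + t • v) - fderiv ℝ f x‖ * ‖v‖ :=
          (fderiv ℝ f (x + t • v) - fderiv ℝ f x).le_opNorm v
      _ ≤ L * ‖x + t • v - x‖ * ‖v‖ := by gcongr; exact hLip _
      _ = L * ‖v‖ ^ 2 * t := by
          rw [add_sub_cancel_left, norm_smul, Real.norm_of_nonneg ht.1]; ring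
  simpa using image_norm_le_of_norm_deriv_right_le_deriv_boundary
    (fun t _ ↦ (hremainder t).continuousAt.continuousWithinAt)
    (fun t _ ↦ (hremainder t).hasDerivWithinAt) (by simp) hbound hderiv_le
    (Set.right_mem_Icc.2 zero_le_one)

end DescentLemma

section LyapunovEnergy

/-- The Lyapunov function of gradient descent: the gap `F x - F xstar` plus `μ / 2` times the
squared distance to the minimizer `xstar`. -/
noncomputable def lyapunovEnergy {E : Type*} [NormedAddCommGroup E] (F : E → ℝ) (μ : ℝ)
    (xstar x : E) : ℝ :=
  F x - F xstar + μ / 2 * ‖x - xstar‖ ^ 2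

variable {E : Type*} [NormedAddCommGroup E] {F : E → ℝ} {μ : ℝ} {xstar x : E}

lemma sub_le_lyapunovEnergy (hμ : 0 ≤ μ) : F x - F xstar ≤ lyapunovEnergy F μ xstar x :=
  le_add_of_nonneg_right (by positivity)

lemma lyapunovEnergy_nonneg (hμ : 0 ≤ μ) (hx : F xstar ≤ F x) : 0 ≤ lyapunovEnergy F μ xstar x :=
  (sub_nonneg.2 hx).trans (sub_le_lyapunovEnergy hμ)

lemma lyapunovEnergy_pos (hμ : 0 < μ) (hx : F xstar ≤ F x) (hne : x ≠ xstar) :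
    0 < lyapunovEnergy F μ xstar x := by
  have hdist : 0 < ‖x - xstar‖ := norm_sub_pos_iff.2 hne
  exact add_pos_of_nonneg_of_pos (sub_nonneg.2 hx) (by positivity)

end LyapunovEnergy

section QuasarConvex

variable {E : Type*} [NormedAddCommGroup E] [InnerProductSpace ℝ E] [CompleteSpace E]
  {F : E → ℝ} {L μ γ s : ℝ} {xstar x : E}

lemma norm_gradient_sub_gradient_s1 (F : E → ℝ) (x y : E) :
    ‖gradient F x - gradient F y‖ = ‖fderiv ℝ F x - fderiv ℝ F y‖ := by
  rw [gradient, gradient, ← map_sub, LinearIsometryEquiv.norm_map]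

lemma le_quadratic_of_lipschitz_gradient (hF : Differentiable ℝ F)
    (hLip : ∀ y, ‖gradient F y - gradient F x‖ ≤ L * ‖y - x‖) (v : E) :
    F (x + v) ≤ F x + ⟪gradient F x, v⟫ + L / 2 * ‖v‖ ^ 2 := by
  simp only [norm_gradient_sub_gradient_s1] at hLip
  have hremainder := (le_abs_self _).trans (norm_sub_sub_fderiv_le_of_lipschitz hF hLip v)
  rw [inner_gradient_left]
  linarith

lemma gradient_step_le (hF : Differentiable ℝ F)
    (hLip : ∀ y, ‖gradient F y - gradient F x‖ ≤ L * ‖y - x‖) (s : ℝ) :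
    F (x - s • gradient F x) ≤ F x - s * (1 - s * L / 2) * ‖gradient F x‖ ^ 2 := by
  have hdescent := le_quadratic_of_lipschitz_gradient hF hLip (-(s • gradient F x))
  rw [← sub_eq_add_neg, inner_neg_right, inner_smul_right, real_inner_self_eq_norm_sq, norm_neg,
    norm_smul, mul_pow, Real.norm_eq_abs, sq_abs] at hdescent
  linear_combination hdescent

/-- `(γ, μ)`-strong quasar convexity of `F` with respect to `xstar`. That `xstar` minimizes `F` is
not part of the definition. -/
def StronglyQuasarConvex (F : E → ℝ) (γ μ : ℝ) (xstar : E) : Prop :=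
  ∀ x, F xstar ≥ F x + (1 / γ) * ⟪gradient F x, xstar - x⟫ + μ / 2 * ‖xstar - x‖ ^ 2

namespace StronglyQuasarConvex

lemma mul_lyapunovEnergy_le_inner (hqc : StronglyQuasarConvex F γ μ xstar) (hγ : 0 < γ) (x : E) :
    γ * lyapunovEnergy F μ xstar x ≤ ⟪gradient F x, x - xstar⟫ := by
  have hx := hqc x
  rw [← neg_sub x xstar, inner_neg_right, norm_neg] at hx
  have hdiv : lyapunovEnergy F μ xstar x ≤ ⟪gradient F x, x - xstar⟫ / γ := by
    rw [lyapunovEnergy]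
    linear_combination hx
  rwa [le_div_iff₀' hγ] at hdiv

lemma quadratic_growth (hqc : StronglyQuasarConvex F γ μ xstar) (hF : Differentiable ℝ F)
    (hmin : ∀ x, F xstar ≤ F x) (hγ0 : 0 < γ) (hγ2 : γ < 2) (x : E) :
    γ * (μ / 2 * ‖x - xstar‖ ^ 2) ≤ (2 - γ) * (F x - F xstar) := by
  set v := x - xstar with hv
  set a := γ * (μ / 2 * ‖v‖ ^ 2)
  let φ : ℝ → ℝ := fun t ↦ F (xstar + t • v) - F xstar
  let φ' : ℝ → ℝ := fun t ↦ ⟪gradient F (xstar + t • v), v⟫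
  have hφ (t : ℝ) : HasDerivAt φ (φ' t) t := by
    simpa only [φ', inner_gradient_left] using
      (hasDerivAt_comp_add_smul (hF _)).sub_const (F xstar)
  have hray (t : ℝ) : γ * φ t + a * t ^ 2 ≤ t * φ' t := by
    have hq := hqc.mul_lyapunovEnergy_le_inner hγ0 (xstar + t • v)
    rw [lyapunovEnergy, add_sub_cancel_left, inner_smul_right, norm_smul, mul_pow,
      Real.norm_eq_abs, sq_abs] at hq
    linear_combination hq
  -- Subtracting the quadratic solution of the equality case leaves a homogeneous inequality.
  have hnonneg : 0 ≤ (2 - γ) * φ 1 - a * 1 ^ 2 := by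
    refine nonneg_of_mul_le_mul_deriv (h := fun t ↦ (2 - γ) * φ t - a * t ^ 2)
      (h' := fun t ↦ (2 - γ) * φ' t - 2 * a * t) (C := a) hγ2 (fun t _ ↦ ?_) (fun t _ ↦ ?_)
      (fun t _ ↦ ?_) one_pos
    · exact (((hφ t).const_mul (2 - γ)).sub ((hasDerivAt_pow 2 t).const_mul a)).congr_deriv
        (by push_cast; ring)
    · linear_combination (2 - γ) * hray t
    · have hgap : 0 ≤ (2 - γ) * φ t := mul_nonneg (sub_pos.2 hγ2).le (sub_nonneg.2 (hmin _))
      rw [Real.rpow_two]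
      linarith
  simpa [φ, hv] using hnonneg

lemma lyapunovEnergy_le (hqc : StronglyQuasarConvex F γ μ xstar) (hF : Differentiable ℝ F)
    (hmin : ∀ x, F xstar ≤ F x) (hγ0 : 0 < γ) (hγ2 : γ < 2) (x : E) :
    lyapunovEnergy F μ xstar x ≤ 2 / γ * (F x - F xstar) := by
  rw [div_mul_eq_mul_div, le_div_iff₀' hγ0, lyapunovEnergy]
  linarith [hqc.quadratic_growth hF hmin hγ0 hγ2 x]

lemma lyapunovEnergy_gradient_step_le (hqc : StronglyQuasarConvex F γ μ xstar)
    (hF : Differentiable ℝ F) (hμ : 0 ≤ μ) (hγ : 0 < γ)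
    (hLip : ∀ y, ‖gradient F y - gradient F x‖ ≤ L * ‖y - x‖)
    (hs0 : 0 ≤ s) (hs : s * (L + μ) ≤ 2) :
    lyapunovEnergy F μ xstar (x - s • gradient F x)
      ≤ (1 - γ * μ * s) * lyapunovEnergy F μ xstar x := by
  set g := gradient F x
  have hdescent : F (x - s • g) ≤ F x - s * (1 - s * L / 2) * ‖g‖ ^ 2 := gradient_step_le hF hLip s
  have hinner : γ * lyapunovEnergy F μ xstar x ≤ ⟪g, x - xstar⟫ :=
    hqc.mul_lyapunovEnergy_le_inner hγ x
  have hdist : ‖x - s • g - xstar‖ ^ 2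
      = ‖x - xstar‖ ^ 2 - 2 * (s * ⟪g, x - xstar⟫) + s ^ 2 * ‖g‖ ^ 2 := by
    rw [sub_right_comm, norm_sub_sq_real, inner_smul_right, real_inner_comm, norm_smul, mul_pow,
      Real.norm_eq_abs, sq_abs]
  have hstep : s * ‖g‖ ^ 2 / 2 * (s * (L + μ)) ≤ s * ‖g‖ ^ 2 / 2 * 2 :=
    mul_le_mul_of_nonneg_left hs (by positivity)
  calc lyapunovEnergy F μ xstar (x - s • g)
      ≤ lyapunovEnergy F μ xstar x - μ * s * ⟪g, x - xstar⟫ := by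
        rw [lyapunovEnergy, lyapunovEnergy, hdist]
        linear_combination hdescent + hstep
    _ ≤ lyapunovEnergy F μ xstar x - μ * s * (γ * lyapunovEnergy F μ xstar x) := by gcongr
    _ = (1 - γ * μ * s) * lyapunovEnergy F μ xstar x := by ring

/-- Otherwise one gradient step would make the energy of a point other than `xstar` negative. -/
lemma one_sub_mul_nonneg [Nontrivial E] (hqc : StronglyQuasarConvex F γ μ xstar)
    (hF : Differentiable ℝ F) (hmin : ∀ x, F xstar ≤ F x) (hμ : 0 < μ) (hγ : 0 < γ)
    (hLip : ∀ x y, ‖gradient F x - gradient F y‖ ≤ L * ‖x - y‖)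
    (hs0 : 0 ≤ s) (hs : s * (L + μ) ≤ 2) : 0 ≤ 1 - γ * μ * s := by
  obtain ⟨y, hy⟩ := exists_ne xstar
  refine nonneg_of_mul_nonneg_left ?_ (lyapunovEnergy_pos hμ (hmin y) hy)
  exact (lyapunovEnergy_nonneg hμ.le (hmin _)).trans
    (hqc.lyapunovEnergy_gradient_step_le hF hμ.le hγ (fun z ↦ hLip z y) hs0 hs)

end StronglyQuasarConvex

theorem stmt_1_general (hF : Differentiable ℝ F) (hμ : 0 < μ) (hγ0 : 0 < γ) (hγ2 : γ < 2)
    (hLip : ∀ x y, ‖gradient F x - gradient F y‖ ≤ L * ‖x - y‖)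
    (hmin : ∀ x, F xstar ≤ F x) (hqc : StronglyQuasarConvex F γ μ xstar)
    (hs0 : 0 ≤ s) (hs : s * (L + μ) ≤ 2)
    {x : ℕ → E} (hrec : ∀ n, x (n + 1) = x n - s • gradient F (x n)) (n : ℕ) :
    F (x n) - F xstar ≤ 2 / γ * (1 - γ * μ * s) ^ n * (F (x 0) - F xstar) := by
  rcases subsingleton_or_nontrivial E with _ | _
  · simp [Subsingleton.elim (x _) xstar]
  have hrate : 0 ≤ 1 - γ * μ * s := hqc.one_sub_mul_nonneg hF hmin hμ hγ0 hLip hs0 hs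
  have hcontract (k : ℕ) : lyapunovEnergy F μ xstar (x (k + 1))
      ≤ (1 - γ * μ * s) * lyapunovEnergy F μ xstar (x k) := by
    rw [hrec k]
    exact hqc.lyapunovEnergy_gradient_step_le hF hμ.le hγ0 (fun y ↦ hLip y (x k)) hs0 hs
  calc F (x n) - F xstar
      ≤ lyapunovEnergy F μ xstar (x n) := sub_le_lyapunovEnergy hμ.le
    _ ≤ (1 - γ * μ * s) ^ n * lyapunovEnergy F μ xstar (x 0) :=
        le_geom (u := fun k ↦ lyapunovEnergy F μ xstar (x k)) hrate n fun k _ ↦ hcontract k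
    _ ≤ (1 - γ * μ * s) ^ n * (2 / γ * (F (x 0) - F xstar)) := by
        gcongr
        exact hqc.lyapunovEnergy_le hF hmin hγ0 hγ2 (x 0)
    _ = 2 / γ * (1 - γ * μ * s) ^ n * (F (x 0) - F xstar) := by ring

end QuasarConvex

/-- linear convergence of gradient descent for `L`-smooth,
`(γ,μ)`-strongly quasar convex functions. -/
theorem stmt_1 {E : Type*} [NormedAddCommGroup E] [InnerProductSpace ℝ E]
    [FiniteDimensional ℝ E]
    (F : E → ℝ) (hF : Differentiable ℝ F)
    (L μ γ s : ℝ) (hμ : 0 < μ) (hμL : μ ≤ L) (hγ0 : 0 < γ) (hγ1 : γ ≤ 1)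
    (hLip : ∀ x y : E, ‖gradient F x - gradient F y‖ ≤ L * ‖x - y‖)
    (xstar : E) (hmin : ∀ x : E, F xstar ≤ F x)
    (hqc : ∀ x : E,
      F xstar ≥ F x + (1 / γ) * ⟪gradient F x, xstar - x⟫ + μ / 2 * ‖xstar - x‖ ^ 2)
    (hs0 : 0 < s) (hs1 : s ≤ 1 / L)
    (x : ℕ → E) (hrec : ∀ n : ℕ, x (n + 1) = x n - s • gradient F (x n)) :
    ∀ n : ℕ, F (x n) - F xstar ≤ 2 / γ * (1 - γ * μ * s) ^ n * (F (x 0) - F xstar) := by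
  have hsL : s * L ≤ 1 := (le_div_iff₀ (hμ.trans_le hμL)).1 hs1
  exact stmt_1_general hF hμ hγ0 (by linarith) hLip hmin hqc hs0.le
    (by linarith [mul_le_mul_of_nonneg_left hμL hs0.le]) hrec
end

section
/- Let F : E → ℝ be L-smooth and (γ,μ)-strongly quasar convex with respect to its minimizer x* for some 0 < μ ≤ L and γ ∈ (0,1]. Let (x_n, y_n, z_n) be generated by Algorithm 1 with stepsize s = γ²μ/L², z₀ = x₀ and constant parameters α = 1/(1 + √(μs)), β = 1 − γ√(μs), η = √(s/μ). Then for all n ∈ ℕ, F(x_n) − F(x*) ≤ (2/γ)(1 − γ²μ/L)ⁿ (F(x₀) − F(x*)). -/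
open scoped RealInnerProductSpace

/-!
Put `η = √(s / μ)`, so that `s = μη²`, `√(μs) = μη` and `y - x = μη (z - y)`. The Lyapunov function
`F x - F x* + μ/2 ‖z - x*‖²` shrinks by the factor `1 - γμη` in each step: the gradient step and the
term `η²‖∇F y‖²` of `‖z_{n+1} - x*‖²` cancel, quasar convexity at `y` pays for `⟪∇F y, y - x*⟫`, and
the comparison of `F y` with `F x` costs `L/2 ‖y - x‖²` by smoothness alone. As `Lη ≤ γ`, this cost
is covered by the negative `‖z - y‖²` term in the expansion of `‖(1 - γμη) z + γμη y - x*‖²`; it is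
here that convexity is replaced by a small step size.

The factor `2 / γ` comes from the quadratic growth `γμ/2 ‖x - x*‖² ≤ (2 - γ) (F x - F x*)`: along a
ray from `x*`, quasar convexity makes `((2 - γ) (F - F x*) - γμ/2 t²) t ^ (-γ)` monotone in the
distance parameter `t`, and its lower limit at `0` is nonnegative.
-/

section RealFunctions

open Set Filter Topology

theorem monotoneOn_mul_rpow_neg {ψ ψ' : ℝ → ℝ} {γ : ℝ}
    (hψ : ∀ t, 0 < t → HasDerivAt ψ (ψ' t) t) (hle : ∀ t, 0 < t → γ * ψ t ≤ t * ψ' t) :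
    MonotoneOn (fun t => ψ t * t ^ (-γ)) (Ioi 0) := by
  have hderiv (t : ℝ) (ht : 0 < t) : HasDerivAt (fun t => ψ t * t ^ (-γ))
      (ψ' t * t ^ (-γ) + ψ t * (-γ * t ^ (-γ - 1))) t :=
    (hψ t ht).mul (Real.hasDerivAt_rpow_const (Or.inl ht.ne'))
  refine monotoneOn_of_hasDerivWithinAt_nonneg (convex_Ioi 0)
    (fun t ht => (hderiv t ht).continuousAt.continuousWithinAt)
    (fun t ht => (hderiv t (interior_subset ht)).hasDerivWithinAt) fun t ht => ?_
  have ht0 : 0 < t := interior_subset ht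
  have hpow : t ^ (-γ) = t * t ^ (-γ - 1) := by
    rw [Real.rpow_sub_one ht0.ne', mul_div_cancel₀ _ ht0.ne']
  calc 0 ≤ (t * ψ' t - γ * ψ t) * t ^ (-γ - 1) :=
        mul_nonneg (sub_nonneg.2 (hle t ht0)) (Real.rpow_nonneg ht0.le _)
    _ = ψ' t * t ^ (-γ) + ψ t * (-γ * t ^ (-γ - 1)) := by rw [hpow]; ring

theorem mul_sq_le_of_mul_add_mul_sq_le_mul_deriv {φ φ' : ℝ → ℝ} {γ c : ℝ} (hγ : γ < 2)
    (hφ : ∀ t, 0 < t → HasDerivAt φ (φ' t) t) (hφ_nonneg : ∀ t, 0 < t → 0 ≤ φ t)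
    (hle : ∀ t, 0 < t → γ * φ t + c * t ^ 2 ≤ t * φ' t) {t : ℝ} (ht : 0 < t) :
    c * t ^ 2 ≤ (2 - γ) * φ t := by
  set ψ : ℝ → ℝ := fun t => (2 - γ) * φ t - c * t ^ 2
  have hγ' : 0 < 2 - γ := sub_pos.2 hγ
  have hψ (t : ℝ) (ht : 0 < t) : HasDerivAt ψ ((2 - γ) * φ' t - c * (2 * t)) t := by
    refine (((hφ t ht).const_mul (2 - γ)).sub ((hasDerivAt_pow 2 t).const_mul c)).congr_deriv ?_
    simp
  have hmono : MonotoneOn (fun t => ψ t * t ^ (-γ)) (Ioi 0) :=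
    monotoneOn_mul_rpow_neg hψ fun t ht => by
      linear_combination (2 - γ) * hle t ht
  have hlower (ε : ℝ) (hε : 0 < ε) : -(c * ε ^ (2 - γ)) ≤ ψ ε * ε ^ (-γ) := by
    have hpow : ε ^ (2 - γ) = ε ^ 2 * ε ^ (-γ) := by
      rw [sub_eq_add_neg, Real.rpow_add hε, Real.rpow_two]
    have := mul_nonneg (mul_nonneg hγ'.le (hφ_nonneg ε hε)) (Real.rpow_nonneg hε.le (-γ))
    rw [hpow]
    linear_combination this
  have hlim : Tendsto (fun ε : ℝ => -(c * ε ^ (2 - γ))) (𝓝[>] 0) (𝓝 0) := by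
    have hcont : Continuous fun ε : ℝ => -(c * ε ^ (2 - γ)) :=
      ((Real.continuous_rpow_const hγ'.le).const_mul c).neg
    simpa [Real.zero_rpow hγ'.ne'] using (hcont.tendsto 0).mono_left nhdsWithin_le_nhds
  have hψt : 0 ≤ ψ t * t ^ (-γ) := by
    refine le_of_tendsto hlim ?_
    filter_upwards [Ioc_mem_nhdsGT ht] with ε hε
    exact (hlower ε hε.1).trans (hmono hε.1 ht hε.2)
  exact sub_nonneg.1 (nonneg_of_mul_nonneg_left hψt (Real.rpow_pos_of_pos ht _))

end RealFunctions

section InnerProductSpace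

variable {E : Type*} [NormedAddCommGroup E] [InnerProductSpace ℝ E]

theorem norm_convexCombination_sub_smul_sq (θ η : ℝ) (u v g : E) :
    ‖(1 - θ) • u + θ • v - η • g‖ ^ 2 = (1 - θ) * ‖u‖ ^ 2 + θ * ‖v‖ ^ 2
      - θ * (1 - θ) * ‖u - v‖ ^ 2 - 2 * η * ((1 - θ) * ⟪g, u - v⟫ + ⟪g, v⟫)
      + η ^ 2 * ‖g‖ ^ 2 := by
  simp only [← real_inner_self_eq_norm_sq, inner_add_left, inner_add_right, inner_sub_left,
    inner_sub_right, real_inner_smul_left, real_inner_smul_right, real_inner_comm u v,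
    real_inner_comm u g, real_inner_comm v g]
  ring

theorem eq_sub_smul_of_eq_smul_add_smul {κ : ℝ} (hκ : 1 + κ ≠ 0) {x y z : E}
    (h : y = (1 / (1 + κ)) • x + (1 - 1 / (1 + κ)) • z) : x = y - κ • (z - y) := by
  subst h
  match_scalars <;> field_simp <;> ring

end InnerProductSpace

/-- The Lyapunov function of Nesterov's method: the optimality gap of the point `x` plus the
squared distance of the auxiliary point `z` to the minimizer `m`, weighted by `μ / 2`. -/
noncomputable def nesterovLyapunov {E : Type*} [NormedAddCommGroup E] (F : E → ℝ) (μ : ℝ)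
    (m x z : E) : ℝ :=
  F x - F m + μ / 2 * ‖z - m‖ ^ 2

section Gradient

open scoped Gradient

variable {E : Type*} [NormedAddCommGroup E] [InnerProductSpace ℝ E] [CompleteSpace E]
  {F : E → ℝ} {m : E} {L γ μ η : ℝ}

/-- `F` is `L`-smooth: differentiable with `L`-Lipschitz gradient. The constant is a real number, so
that it can enter the estimates without coercions. -/
structure IsLSmooth (L : ℝ) (F : E → ℝ) : Prop where
  differentiable : Differentiable ℝ F
  norm_gradient_sub_le : ∀ p q, ‖∇ F p - ∇ F q‖ ≤ L * ‖p - q‖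

/-- `F` is `(γ, μ)`-strongly quasar convex with respect to its minimizer `m`. -/
structure IsStronglyQuasarConvex (γ μ : ℝ) (F : E → ℝ) (m : E) : Prop where
  differentiable : Differentiable ℝ F
  minimizer_le : ∀ p, F m ≤ F p
  quasar_le : ∀ p, F p + 1 / γ * ⟪∇ F p, m - p⟫ + μ / 2 * ‖m - p‖ ^ 2 ≤ F m

/-- The iterates of the three-point form of Nesterov's accelerated gradient method for `F`, with
step size `s` and constant parameters `α`, `β`, `η`. -/
structure IsNesterovSequence (F : E → ℝ) (s α β η : ℝ) (x y z : ℕ → E) : Prop where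
  z_zero : z 0 = x 0
  y_eq : ∀ n, y n = α • x n + (1 - α) • z n
  x_succ : ∀ n, x (n + 1) = y n - s • ∇ F (y n)
  z_succ : ∀ n, z (n + 1) = β • z n + (1 - β) • y n - η • ∇ F (y n)

theorem hasDerivAt_comp_add_smul_s3 (hF : Differentiable ℝ F) (p d : E) (t : ℝ) :
    HasDerivAt (fun r : ℝ => F (p + r • d)) ⟪∇ F (p + t • d), d⟫ t := by
  have hline : HasDerivAt (fun r : ℝ => p + r • d) d t := by
    simpa using ((hasDerivAt_id t).smul_const d).const_add p
  rw [inner_gradient_left]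
  exact (hF (p + t • d)).hasFDerivAt.comp_hasDerivAt t hline

namespace IsLSmooth

theorem abs_sub_sub_inner_le (hF : IsLSmooth L F) (p d : E) :
    |F (p + d) - F p - ⟪∇ F p, d⟫| ≤ L / 2 * ‖d‖ ^ 2 := by
  set r : ℝ → ℝ := fun t => F (p + t • d) - F p - t * ⟪∇ F p, d⟫
  have hr (t : ℝ) : HasDerivAt r (⟪∇ F (p + t • d), d⟫ - ⟪∇ F p, d⟫) t := by
    refine (((hasDerivAt_comp_add_smul_s3 hF.differentiable p d t).sub_const (F p)).sub
      ((hasDerivAt_id t).mul_const ⟪∇ F p, d⟫)).congr_deriv ?_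
    rw [one_mul]
  have hquadratic (t : ℝ) :
      HasDerivAt (fun t => L / 2 * ‖d‖ ^ 2 * t ^ 2) (L / 2 * ‖d‖ ^ 2 * (2 * t)) t := by
    simpa using (hasDerivAt_pow 2 t).const_mul (L / 2 * ‖d‖ ^ 2)
  have hbound (t : ℝ) (ht : t ∈ Set.Ico (0 : ℝ) 1) :
      ‖⟪∇ F (p + t • d), d⟫ - ⟪∇ F p, d⟫‖ ≤ L / 2 * ‖d‖ ^ 2 * (2 * t) := by
    have hlip := hF.norm_gradient_sub_le (p + t • d) p
    rw [add_sub_cancel_left, norm_smul, Real.norm_of_nonneg ht.1] at hlip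
    calc ‖⟪∇ F (p + t • d), d⟫ - ⟪∇ F p, d⟫‖ = ‖⟪∇ F (p + t • d) - ∇ F p, d⟫‖ := by
          rw [inner_sub_left]
      _ ≤ ‖∇ F (p + t • d) - ∇ F p‖ * ‖d‖ := norm_inner_le_norm _ _
      _ ≤ L * (t * ‖d‖) * ‖d‖ := by gcongr
      _ = L / 2 * ‖d‖ ^ 2 * (2 * t) := by ring
  simpa [r] using image_norm_le_of_norm_deriv_right_le_deriv_boundary
    (fun t _ => (hr t).continuousAt.continuousWithinAt) (fun t _ => (hr t).hasDerivWithinAt)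
    (by simp [r]) hquadratic hbound (Set.right_mem_Icc.2 zero_le_one)

theorem apply_sub_smul_gradient_le (hF : IsLSmooth L F) {s : ℝ} (hs : 0 ≤ s) (hLs : L * s ≤ 1)
    (p : E) : F (p - s • ∇ F p) ≤ F p - s / 2 * ‖∇ F p‖ ^ 2 := by
  have hdescent := (abs_le.1 (hF.abs_sub_sub_inner_le p (-(s • ∇ F p)))).2
  rw [← sub_eq_add_neg, inner_neg_right, real_inner_smul_right, real_inner_self_eq_norm_sq,
    norm_neg, norm_smul, mul_pow, Real.norm_eq_abs, sq_abs] at hdescent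
  have hgain : 0 ≤ s * (1 - L * s) * ‖∇ F p‖ ^ 2 :=
    mul_nonneg (mul_nonneg hs (sub_nonneg.2 hLs)) (sq_nonneg _)
  linear_combination hdescent + hgain / 2

end IsLSmooth

namespace IsStronglyQuasarConvex

theorem mul_gap_add_le_inner (hF : IsStronglyQuasarConvex γ μ F m) (hγ : 0 < γ) (p : E) :
    γ * (F p - F m) + γ * μ / 2 * ‖p - m‖ ^ 2 ≤ ⟪∇ F p, p - m⟫ := by
  have hscaled := mul_le_mul_of_nonneg_left (hF.quasar_le p) hγ.le
  rw [← neg_sub p m, inner_neg_right, norm_neg] at hscaled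
  have hcancel : γ * (1 / γ) = 1 := mul_one_div_cancel hγ.ne'
  linear_combination hscaled + ⟪∇ F p, p - m⟫ * hcancel

theorem quadratic_growth (hF : IsStronglyQuasarConvex γ μ F m) (hγ : 0 < γ) (hγ2 : γ < 2) (p : E) :
    γ * μ / 2 * ‖p - m‖ ^ 2 ≤ (2 - γ) * (F p - F m) := by
  have hray (t : ℝ) (ht : 0 < t) :
      γ * (F (m + t • (p - m)) - F m) + γ * μ / 2 * ‖p - m‖ ^ 2 * t ^ 2
        ≤ t * ⟪∇ F (m + t • (p - m)), p - m⟫ := by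
    have := hF.mul_gap_add_le_inner hγ (m + t • (p - m))
    rw [add_sub_cancel_left, real_inner_smul_right, norm_smul, Real.norm_of_nonneg ht.le] at this
    linear_combination this
  simpa using mul_sq_le_of_mul_add_mul_sq_le_mul_deriv hγ2
    (fun t _ => (hasDerivAt_comp_add_smul_s3 hF.differentiable m (p - m) t).sub_const (F m))
    (fun t _ => sub_nonneg.2 (hF.minimizer_le _)) hray one_pos

theorem gradient_minimizer (hF : IsStronglyQuasarConvex γ μ F m) : ∇ F m = 0 := by
  have hmin : IsLocalMin F m := Filter.Eventually.of_forall hF.minimizer_le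
  rw [gradient, hmin.fderiv_eq_zero, map_zero]

theorem mul_le_mul_of_isLSmooth [Nontrivial E] (hF : IsStronglyQuasarConvex γ μ F m)
    (hL : IsLSmooth L F) (hγ : 0 < γ) (hγ2 : γ < 2) : γ * μ ≤ (2 - γ) * L := by
  obtain ⟨p, hp⟩ := exists_ne m
  have hgrowth := hF.quadratic_growth hγ hγ2 p
  have hupper : F p - F m ≤ L / 2 * ‖p - m‖ ^ 2 := by
    simpa [hF.gradient_minimizer] using (abs_le.1 (hL.abs_sub_sub_inner_le m (p - m))).2
  have hdist : 0 < ‖p - m‖ ^ 2 := pow_pos (norm_pos_iff.2 (sub_ne_zero.2 hp)) 2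
  refine le_of_mul_le_mul_right ?_ hdist
  linear_combination 2 * hgrowth + 2 * (2 - γ) * hupper

theorem nesterovLyapunov_self_le (hF : IsStronglyQuasarConvex γ μ F m) (hγ : 0 < γ) (hγ2 : γ < 2)
    (p : E) : nesterovLyapunov F μ m p p ≤ 2 / γ * (F p - F m) := by
  rw [nesterovLyapunov, div_mul_eq_mul_div 2 γ, le_div_iff₀ hγ]
  linear_combination hF.quadratic_growth hγ hγ2 p

theorem nesterovLyapunov_step_le (hF : IsStronglyQuasarConvex γ μ F m) (hL : IsLSmooth L F)
    (hγ : 0 < γ) (hμ : 0 ≤ μ) (hη : 0 ≤ η) (hLη : L * η ≤ γ) (hrate : γ * (μ * η) ≤ 1)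
    {x y z : E} (hxy : x = y - (μ * η) • (z - y)) :
    nesterovLyapunov F μ m (y - (μ * η ^ 2) • ∇ F y)
        ((1 - γ * (μ * η)) • z + (γ * (μ * η)) • y - η • ∇ F y)
      ≤ (1 - γ * (μ * η)) * nesterovLyapunov F μ m x z := by
  have hμη : 0 ≤ μ * η := mul_nonneg hμ hη
  have hLη' : L * η * (μ * η) ≤ γ * (μ * η) := mul_le_mul_of_nonneg_right hLη hμη
  have hdescent : F (y - (μ * η ^ 2) • ∇ F y) ≤ F y - μ * η ^ 2 / 2 * ‖∇ F y‖ ^ 2 :=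
    hL.apply_sub_smul_gradient_le (by positivity) (by linear_combination hLη' + hrate) y
  have hcoupling : F y ≤ F x + μ * η * ⟪∇ F y, z - y⟫ + γ * μ * (μ * η) / 2 * ‖z - y‖ ^ 2 := by
    have hsmooth := (abs_le.1 (hL.abs_sub_sub_inner_le y (-((μ * η) • (z - y))))).1
    rw [← sub_eq_add_neg, ← hxy, inner_neg_right, real_inner_smul_right, norm_neg, norm_smul,
      Real.norm_of_nonneg hμη] at hsmooth
    linear_combination hsmooth + μ / 2 * ‖z - y‖ ^ 2 * hLη'
  have hquasar := mul_le_mul_of_nonneg_left (hF.mul_gap_add_le_inner hγ y) hμη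
  have hcoupling' := mul_le_mul_of_nonneg_left hcoupling (sub_nonneg.2 hrate)
  have hmirror : (1 - γ * (μ * η)) • z + (γ * (μ * η)) • y - η • ∇ F y - m
      = (1 - γ * (μ * η)) • (z - m) + (γ * (μ * η)) • (y - m) - η • ∇ F y := by module
  rw [nesterovLyapunov, nesterovLyapunov, hmirror, norm_convexCombination_sub_smul_sq,
    sub_sub_sub_cancel_right]
  linear_combination hdescent + hcoupling' + hquasar

theorem mul_mul_le_one [Nontrivial E] (hF : IsStronglyQuasarConvex γ μ F m) (hL : IsLSmooth L F)
    (hγ : 0 < γ) (hγ2 : γ < 2) (hη : 0 ≤ η) (hLη : L * η ≤ γ) : γ * (μ * η) ≤ 1 :=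
  calc γ * (μ * η) = γ * μ * η := (mul_assoc _ _ _).symm
    _ ≤ (2 - γ) * L * η := mul_le_mul_of_nonneg_right (hF.mul_le_mul_of_isLSmooth hL hγ hγ2) hη
    _ = (2 - γ) * (L * η) := mul_assoc _ _ _
    _ ≤ (2 - γ) * γ := mul_le_mul_of_nonneg_left hLη (sub_nonneg.2 hγ2.le)
    _ ≤ 1 := by linear_combination sq_nonneg (γ - 1)

end IsStronglyQuasarConvex

theorem IsNesterovSequence.nesterovLyapunov_le {x y z : ℕ → E}
    (h : IsNesterovSequence F (μ * η ^ 2) (1 / (1 + μ * η)) (1 - γ * (μ * η)) η x y z)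
    (hF : IsStronglyQuasarConvex γ μ F m) (hL : IsLSmooth L F) (hγ : 0 < γ) (hμ : 0 ≤ μ)
    (hη : 0 ≤ η) (hLη : L * η ≤ γ) (hrate : γ * (μ * η) ≤ 1) (n : ℕ) :
    nesterovLyapunov F μ m (x n) (z n)
      ≤ (1 - γ * (μ * η)) ^ n * nesterovLyapunov F μ m (x 0) (z 0) := by
  refine le_geom (u := fun n => nesterovLyapunov F μ m (x n) (z n)) (sub_nonneg.2 hrate) n
    fun k _ => ?_
  have hxy := eq_sub_smul_of_eq_smul_add_smul (by positivity : 1 + μ * η ≠ 0) (h.y_eq k)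
  simpa only [h.x_succ, h.z_succ, sub_sub_cancel] using
    hF.nesterovLyapunov_step_le hL hγ hμ hη hLη hrate hxy

theorem stmt_3_general {s : ℝ} (hL : IsLSmooth L F) (hF : IsStronglyQuasarConvex γ μ F m)
    (hγ : 0 < γ) (hγ2 : γ < 2) (hμ : 0 < μ) (hs : 0 ≤ s) (hLs : L ^ 2 * s ≤ γ ^ 2 * μ)
    {x y z : ℕ → E}
    (h : IsNesterovSequence F s (1 / (1 + √(μ * s))) (1 - γ * √(μ * s)) √(s / μ) x y z) (n : ℕ) :
    F (x n) - F m ≤ 2 / γ * (1 - γ * √(μ * s)) ^ n * (F (x 0) - F m) := by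
  rcases subsingleton_or_nontrivial E with _ | _
  · simp [Subsingleton.elim (x _) m]
  obtain ⟨η, hη, rfl⟩ : ∃ η, 0 ≤ η ∧ s = μ * η ^ 2 :=
    ⟨√(s / μ), Real.sqrt_nonneg _, by rw [Real.sq_sqrt (by positivity), mul_div_cancel₀ _ hμ.ne']⟩
  have hsqrt_mul : √(μ * (μ * η ^ 2)) = μ * η := by
    rw [← mul_assoc, ← sq, ← mul_pow, Real.sqrt_sq (by positivity)]
  have hsqrt_div : √(μ * η ^ 2 / μ) = η := by rw [mul_div_cancel_left₀ _ hμ.ne', Real.sqrt_sq hη]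
  rw [hsqrt_mul, hsqrt_div] at h
  have hLη : L * η ≤ γ := by
    refine le_of_sq_le_sq (le_of_mul_le_mul_left ?_ hμ) hγ.le
    linear_combination hLs
  have hrate : γ * (μ * η) ≤ 1 := hF.mul_mul_le_one hL hγ hγ2 hη hLη
  calc F (x n) - F m ≤ nesterovLyapunov F μ m (x n) (z n) :=
        le_add_of_nonneg_right (by positivity)
    _ ≤ (1 - γ * (μ * η)) ^ n * nesterovLyapunov F μ m (x 0) (z 0) :=
        h.nesterovLyapunov_le hF hL hγ hμ.le hη hLη hrate n
    _ ≤ (1 - γ * (μ * η)) ^ n * (2 / γ * (F (x 0) - F m)) := by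
        rw [h.z_zero]
        exact mul_le_mul_of_nonneg_left (hF.nesterovLyapunov_self_le hγ hγ2 (x 0))
          (pow_nonneg (sub_nonneg.2 hrate) n)
    _ = 2 / γ * (1 - γ * √(μ * (μ * η ^ 2))) ^ n * (F (x 0) - F m) := by rw [hsqrt_mul]; ring

end Gradient

/-- without a curvature assumption, Nesterov accelerated gradient
(3-points form) with the small step size `s = γ²μ/L²` converges linearly with
rate `1 - γ²μ/L` for `L`-smooth `(γ,μ)`-strongly quasar convex functions. -/
theorem stmt_3 {E : Type*} [NormedAddCommGroup E] [InnerProductSpace ℝ E]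
    [FiniteDimensional ℝ E]
    (F : E → ℝ) (hF : Differentiable ℝ F)
    (L μ γ s : ℝ) (hμ : 0 < μ) (hμL : μ ≤ L) (hγ0 : 0 < γ) (hγ1 : γ ≤ 1)
    (hLip : ∀ x y : E, ‖gradient F x - gradient F y‖ ≤ L * ‖x - y‖)
    (xstar : E) (hmin : ∀ x : E, F xstar ≤ F x)
    (hqc : ∀ x : E,
      F xstar ≥ F x + (1 / γ) * ⟪gradient F x, xstar - x⟫ + μ / 2 * ‖xstar - x‖ ^ 2)
    (hs : s = γ ^ 2 * μ / L ^ 2)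
    (x y z : ℕ → E) (hz0 : z 0 = x 0)
    (hy : ∀ n : ℕ, y n = (1 / (1 + Real.sqrt (μ * s))) • x n
      + (1 - 1 / (1 + Real.sqrt (μ * s))) • z n)
    (hx : ∀ n : ℕ, x (n + 1) = y n - s • gradient F (y n))
    (hz : ∀ n : ℕ, z (n + 1) = (1 - γ * Real.sqrt (μ * s)) • z n
      + (γ * Real.sqrt (μ * s)) • y n - Real.sqrt (s / μ) • gradient F (y n)) :
    ∀ n : ℕ, F (x n) - F xstar
      ≤ 2 / γ * (1 - γ ^ 2 * μ / L) ^ n * (F (x 0) - F xstar) := by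
  subst hs
  have hL : 0 < L := hμ.trans_le hμL
  have hrate : γ ^ 2 * μ / L = γ * √(μ * (γ ^ 2 * μ / L ^ 2)) := by
    rw [show μ * (γ ^ 2 * μ / L ^ 2) = (γ * μ / L) ^ 2 by ring, Real.sqrt_sq (by positivity)]
    ring
  rw [hrate]
  exact stmt_3_general ⟨hF, hLip⟩ ⟨hF, hmin, hqc⟩ hγ0 (by linarith) hμ (by positivity)
    (mul_div_cancel₀ _ (by positivity)).le
    ⟨hz0, hy, hx, fun n => by rw [sub_sub_cancel]; exact hz n⟩
end

section
/- Let F : E → ℝ be differentiable, s > 0, μ > 0, γ ∈ (0,1], and let (x_n, y_n, z_n) be generated by Algorithm 1 with z₀ = x₀ and constant parameters α = 1/(1 + √(μs)), β = 1 − γ√(μs), η = √(s/μ). Then for all n ≥ 1: y_n = x_n + ((1 − γ√(μs))/(1 + √(μs)))(x_n − x_{n−1}) + (√(μs)/(1 + √(μs)))(γ − 1)(x_n − y_{n−1}), i.e. the 3-points scheme is equivalent to this 2-points momentum scheme together with x_{n+1} = y_n − s∇F(y_n). -/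
open scoped RealInnerProductSpace

/-!
Since `s • g n = y n - x (n + 1)` and `(1 - α) • z n = y n - α • x n` only involve `x` and `y`,
multiplying the recursion for `z` by `1 - α` eliminates `z` and `g`, provided
`(1 - α) * η` is a multiple `θ * s` of the stepsize. For the parameters of the theorem,
`√(s / μ) * √(μ * s) = s` gives `θ = α`.
-/

/-- The three-point scheme (Algorithm 1) with parameters `α`, `β`, `η` and stepsize `s`, driven by
an arbitrary sequence of directions `g`; in Algorithm 1, `g n = ∇F (y n)`. The initial
values `x 0` and `z 0` are left free. -/
structure IsThreePointScheme {R M : Type*} [Ring R] [AddCommGroup M] [Module R M]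
    (α β η s : R) (g x y z : ℕ → M) : Prop where
  y_eq : ∀ n, y n = α • x n + (1 - α) • z n
  x_succ : ∀ n, x (n + 1) = y n - s • g n
  z_succ : ∀ n, z (n + 1) = β • z n + (1 - β) • y n - η • g n

namespace IsThreePointScheme

variable {R M : Type*} [AddCommGroup M] {g x y z : ℕ → M}

theorem one_sub_smul_z [Ring R] [Module R M] {α β η s : R}
    (h : IsThreePointScheme α β η s g x y z) (n : ℕ) :
    (1 - α) • z n = y n - α • x n :=
  eq_sub_of_add_eq' (h.y_eq n).symm

theorem smul_direction [Ring R] [Module R M] {α β η s : R}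
    (h : IsThreePointScheme α β η s g x y z) (n : ℕ) :
    s • g n = y n - x (n + 1) := by
  rw [h.x_succ n, sub_sub_cancel]

theorem y_succ_eq [CommRing R] [Module R M] {α β η s θ : R}
    (h : IsThreePointScheme α β η s g x y z) (hθ : (1 - α) * η = θ * s) (n : ℕ) :
    y (n + 1) = x (n + 1) + (α * β) • (x (n + 1) - x n)
      + (θ + α * (1 - β) - 1) • (x (n + 1) - y n) :=
  calc
    y (n + 1) = α • x (n + 1) + (1 - α) • (β • z n + (1 - β) • y n - η • g n) := by
      rw [h.y_eq (n + 1), h.z_succ n]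
    _ = α • x (n + 1) + β • ((1 - α) • z n) + ((1 - α) * (1 - β)) • y n
        - ((1 - α) * η) • g n := by module
    _ = α • x (n + 1) + β • (y n - α • x n) + ((1 - α) * (1 - β)) • y n
        - θ • (y n - x (n + 1)) := by
      rw [h.one_sub_smul_z, hθ, mul_smul θ s, h.smul_direction]
    _ = x (n + 1) + (α * β) • (x (n + 1) - x n)
        + (θ + α * (1 - β) - 1) • (x (n + 1) - y n) := by module

end IsThreePointScheme

theorem sqrt_div_mul_sqrt_mul {s μ : ℝ} (hs : 0 ≤ s) (hμ : 0 < μ) :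
    √(s / μ) * √(μ * s) = s := by
  rw [← Real.sqrt_mul (div_nonneg hs hμ.le), ← mul_assoc, div_mul_cancel₀ s hμ.ne',
    Real.sqrt_mul_self hs]

theorem stmt_4_general {M : Type*} [AddCommGroup M] [Module ℝ M] {s μ : ℝ} (hs : 0 ≤ s)
    (hμ : 0 < μ) (γ : ℝ) {g x y z : ℕ → M}
    (h : IsThreePointScheme (1 / (1 + √(μ * s))) (1 - γ * √(μ * s)) √(s / μ) s g x y z) (n : ℕ) :
    y (n + 1) = x (n + 1)
      + ((1 - γ * √(μ * s)) / (1 + √(μ * s))) • (x (n + 1) - x n)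
      + ((√(μ * s) / (1 + √(μ * s))) * (γ - 1)) • (x (n + 1) - y n) := by
  have hη : √(s / μ) * √(μ * s) = s := sqrt_div_mul_sqrt_mul hs hμ
  have hne : 1 + √(μ * s) ≠ 0 := by positivity
  have hθ : (1 - 1 / (1 + √(μ * s))) * √(s / μ) = 1 / (1 + √(μ * s)) * s := by
    field_simp
    linear_combination hη
  have hαβ : 1 / (1 + √(μ * s)) * (1 - γ * √(μ * s)) = (1 - γ * √(μ * s)) / (1 + √(μ * s)) :=
    one_div_mul_eq_div _ _
  have hcorr : 1 / (1 + √(μ * s)) + 1 / (1 + √(μ * s)) * (1 - (1 - γ * √(μ * s))) - 1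
      = √(μ * s) / (1 + √(μ * s)) * (γ - 1) := by
    field_simp
    ring
  simpa only [hαβ, hcorr] using h.y_succ_eq hθ n

/-- the 3-points Nesterov scheme with constant parameters
`α = 1/(1+√(μs))`, `β = 1-γ√(μs)`, `η = √(s/μ)` is equivalent to the 2-points
momentum scheme. -/
theorem stmt_4 {E : Type*} [NormedAddCommGroup E] [InnerProductSpace ℝ E]
    [FiniteDimensional ℝ E]
    (F : E → ℝ) (hF : Differentiable ℝ F)
    (s μ γ : ℝ) (hs : 0 < s) (hμ : 0 < μ) (hγ0 : 0 < γ) (hγ1 : γ ≤ 1)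
    (x y z : ℕ → E) (hz0 : z 0 = x 0)
    (hy : ∀ n : ℕ, y n = (1 / (1 + Real.sqrt (μ * s))) • x n
      + (1 - 1 / (1 + Real.sqrt (μ * s))) • z n)
    (hx : ∀ n : ℕ, x (n + 1) = y n - s • gradient F (y n))
    (hz : ∀ n : ℕ, z (n + 1) = (1 - γ * Real.sqrt (μ * s)) • z n
      + (γ * Real.sqrt (μ * s)) • y n - Real.sqrt (s / μ) • gradient F (y n)) :
    ∀ n : ℕ, y (n + 1) = x (n + 1)
      + ((1 - γ * Real.sqrt (μ * s)) / (1 + Real.sqrt (μ * s))) • (x (n + 1) - x n)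
      + ((Real.sqrt (μ * s) / (1 + Real.sqrt (μ * s))) * (γ - 1)) • (x (n + 1) - y n) :=
  stmt_4_general hs.le hμ γ ⟨hy, hx, by simpa only [sub_sub_cancel] using hz⟩
end

section
/- Let F : E → ℝ be differentiable, s > 0, and let (α_n), (β_n), (η_n) be real sequences with α_n ∈ (0,1) for all n. Suppose sequences (x_n), (y_n), (z_n) satisfy y_n = α_n x_n + (1 − α_n) z_n, x_{n+1} = y_n − s∇F(y_n), z_{n+1} = β_n z_n + (1 − β_n) y_n − η_n ∇F(y_n). Then for all n ≥ 1: y_n = x_n + ((1 − α_n)/(1 − α_{n−1})) α_{n−1} β_{n−1} (x_n − x_{n−1}) + (1 − α_n)(η_{n−1}/s − α_{n−1}β_{n−1}/(1 − α_{n−1}) − 1)(x_n − y_{n−1}). -/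
open scoped RealInnerProductSpace

/-!
The step `x' = y - s • g` makes the search direction `g` a multiple of `x' - y`, and the averaging
`y = a • x + (1 - a) • z` makes `z - y` a multiple of `y - x`. Hence the gap `z' - x'` is a
combination of `x' - x` and `x' - y`, and `y'` is `x'` moved by the fraction `1 - a'` of that gap.
-/

section ThreePointScheme

variable {𝕜 E : Type*} [Field 𝕜] [AddCommGroup E] [Module 𝕜 E]

theorem sub_combo_eq_div_smul_combo_sub {a : 𝕜} (ha : a ≠ 1) (x z : E) :
    z - (a • x + (1 - a) • z) = (a / (1 - a)) • (a • x + (1 - a) • z - x) := by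
  have h_one_sub : 1 - a ≠ 0 := sub_ne_zero.mpr ha.symm
  calc
    z - (a • x + (1 - a) • z) = a • (z - x) := by module
    _ = (a / (1 - a)) • (1 - a) • (z - x) := by rw [smul_smul, div_mul_cancel₀ _ h_one_sub]
    _ = (a / (1 - a)) • (a • x + (1 - a) • z - x) := by module

theorem three_point_step_gap_eq {s a b c : 𝕜} (hs : s ≠ 0) (ha : a ≠ 1)
    {x y z g x' z' : E} (hy : y = a • x + (1 - a) • z) (hx : x' = y - s • g)
    (hz : z' = b • z + (1 - b) • y - c • g) :
    z' - x' = (a * b / (1 - a)) • (x' - x) + (c / s - a * b / (1 - a) - 1) • (x' - y) := by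
  have h_gap : z - y = (a / (1 - a)) • (y - x) := hy ▸ sub_combo_eq_div_smul_combo_sub ha x z
  have h_direction : g = s⁻¹ • (y - x') :=
    (eq_inv_smul_iff₀ hs).mpr (by rw [hx, sub_sub_cancel])
  calc
    z' - x' = b • (z - y) - c • g - (x' - y) := by rw [hz]; module
    _ = b • (a / (1 - a)) • (y - x) - c • s⁻¹ • (y - x') - (x' - y) := by
      rw [h_gap, ← h_direction]
    _ = (a * b / (1 - a)) • (x' - x) + (c / s - a * b / (1 - a) - 1) • (x' - y) := by module

theorem stmt_5_general {s : 𝕜} (hs : s ≠ 0) {α β η : ℕ → 𝕜} (hα : ∀ n, α n ≠ 1)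
    {g x y z : ℕ → E} (hy : ∀ n, y n = α n • x n + (1 - α n) • z n)
    (hx : ∀ n, x (n + 1) = y n - s • g n)
    (hz : ∀ n, z (n + 1) = β n • z n + (1 - β n) • y n - η n • g n) (n : ℕ) :
    y (n + 1) = x (n + 1)
      + ((1 - α (n + 1)) / (1 - α n) * (α n * β n)) • (x (n + 1) - x n)
      + ((1 - α (n + 1)) * (η n / s - α n * β n / (1 - α n) - 1)) • (x (n + 1) - y n) := by
  calc
    y (n + 1) = x (n + 1) + (1 - α (n + 1)) • (z (n + 1) - x (n + 1)) := by
      rw [hy (n + 1)]; module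
    _ = x (n + 1) + (1 - α (n + 1)) • ((α n * β n / (1 - α n)) • (x (n + 1) - x n)
          + (η n / s - α n * β n / (1 - α n) - 1) • (x (n + 1) - y n)) := by
      rw [three_point_step_gap_eq hs (hα n) (hy n) (hx n) (hz n)]
    _ = _ := by module

end ThreePointScheme

/-- the general 3-points Nesterov scheme with varying parameters
`α_n ∈ (0,1)`, `β_n`, `η_n` can be rewritten as a 2-points momentum scheme. -/
theorem stmt_5 {E : Type*} [NormedAddCommGroup E] [InnerProductSpace ℝ E]
    [FiniteDimensional ℝ E]
    (F : E → ℝ) (hF : Differentiable ℝ F)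
    (s : ℝ) (hs : 0 < s)
    (α β η : ℕ → ℝ) (hα : ∀ n : ℕ, α n ∈ Set.Ioo (0 : ℝ) 1)
    (x y z : ℕ → E)
    (hy : ∀ n : ℕ, y n = (α n) • x n + (1 - α n) • z n)
    (hx : ∀ n : ℕ, x (n + 1) = y n - s • gradient F (y n))
    (hz : ∀ n : ℕ, z (n + 1) = (β n) • z n + (1 - β n) • y n - (η n) • gradient F (y n)) :
    ∀ n : ℕ, y (n + 1) = x (n + 1)
      + (((1 - α (n + 1)) / (1 - α n)) * (α n * β n)) • (x (n + 1) - x n)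
      + ((1 - α (n + 1)) * (η n / s - α n * β n / (1 - α n) - 1)) • (x (n + 1) - y n) := by
  exact stmt_5_general hs.ne' (fun n => (hα n).2.ne) hy hx hz
end

section
/- Let f : E → ℝ be continuously differentiable, γ ∈ (0,1), μ > 0 and x̂ ∈ E. Suppose that for all x ∈ E, f(x̂) ≥ f(x) + (1/γ)⟨∇f(x), x̂ − x⟩ + (μ/2)‖x̂ − x‖². Then ∇f(x̂) = 0. (Equivalently: the (γ,μ)-strong quasar convexity inequality with respect to a point x̂ with ∇f(x̂) ≠ 0 forces γ = 1.) -/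
open scoped RealInnerProductSpace

/-! Along a ray `t ↦ x̂ + t v`, write `φ t = f (x̂ + t v)`. Dividing the inequality by `t / γ` gives
`φ' t ≥ γ (φ t - φ 0) / t + O(t)`, whose right-hand side tends to `γ φ' 0`. By the mean value
theorem `φ' 0` is at least any lower bound of `φ'` near `0`, so `φ' 0 ≥ γ φ' 0`, and `γ < 1` forces
`φ' 0 ≥ 0`. Applying this to `v` and to `-v` shows that the derivative of `f` at `x̂` vanishes. -/

open Filter Set Topology

theorem le_of_hasDerivWithinAt_Ioi_of_eventually_le {φ φ' : ℝ → ℝ} {x a c : ℝ}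
    (hx : HasDerivWithinAt φ a (Ioi x) x) (hφ : ∀ᶠ t in 𝓝[>] x, HasDerivAt φ (φ' t) t)
    (hc : ∀ᶠ t in 𝓝[>] x, c ≤ φ' t) : c ≤ a := by
  obtain ⟨u, hxu, hu⟩ := mem_nhdsGT_iff_exists_Ioo_subset.1 (hφ.and hc)
  refine ge_of_tendsto ((hasDerivWithinAt_iff_tendsto_slope' self_notMem_Ioi).1 hx) ?_
  filter_upwards [Ioo_mem_nhdsGT hxu] with t ht
  have hcont : ContinuousOn φ (Icc x t) := fun s hs ↦ by
    rcases hs.1.eq_or_lt with rfl | hxs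
    · exact hx.Ici_of_Ioi.continuousWithinAt.mono Icc_subset_Ici_self
    · exact (hu ⟨hxs, hs.2.trans_lt ht.2⟩).1.continuousAt.continuousWithinAt
  obtain ⟨s, hs, hslope⟩ := exists_hasDerivAt_eq_slope φ φ' ht.1 hcont
    fun s hs ↦ (hu ⟨hs.1, hs.2.trans ht.2⟩).1
  rw [slope_def_field, ← hslope]
  exact (hu ⟨hs.1, hs.2.trans ht.2⟩).2

theorem le_of_hasDerivWithinAt_Ioi_of_tendsto_of_eventually_le {φ φ' b : ℝ → ℝ} {x a c : ℝ}
    (hx : HasDerivWithinAt φ a (Ioi x) x) (hφ : ∀ᶠ t in 𝓝[>] x, HasDerivAt φ (φ' t) t)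
    (hb : Tendsto b (𝓝[>] x) (𝓝 c)) (hle : ∀ᶠ t in 𝓝[>] x, b t ≤ φ' t) : c ≤ a :=
  le_of_forall_lt_imp_le_of_dense fun d hd ↦
    le_of_hasDerivWithinAt_Ioi_of_eventually_le hx hφ <| by
      filter_upwards [hb.eventually_const_lt hd, hle] with t hdt ht using hdt.le.trans ht

theorem nonneg_of_hasDerivWithinAt_Ioi_of_quasarConvex {φ φ' : ℝ → ℝ} {a γ κ : ℝ}
    (h0 : HasDerivWithinAt φ a (Ioi 0) 0) (hφ : ∀ᶠ t in 𝓝[>] 0, HasDerivAt φ (φ' t) t)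
    (hγ0 : 0 < γ) (hγ1 : γ < 1)
    (h : ∀ᶠ t in 𝓝[>] 0, φ t - 1 / γ * (t * φ' t) + κ * t ^ 2 ≤ φ 0) : 0 ≤ a := by
  have hlim : Tendsto (fun t ↦ γ * (slope φ 0 t + κ * t)) (𝓝[>] 0) (𝓝 (γ * a)) := by
    have hslope := (hasDerivWithinAt_iff_tendsto_slope' self_notMem_Ioi).1 h0
    have hid : Tendsto (fun t : ℝ ↦ t) (𝓝[>] 0) (𝓝 0) := nhdsWithin_le_nhds
    simpa using (hslope.add (hid.const_mul κ)).const_mul γ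
  have hle : ∀ᶠ t in 𝓝[>] 0, γ * (slope φ 0 t + κ * t) ≤ φ' t := by
    filter_upwards [h, self_mem_nhdsWithin] with t ht (htpos : 0 < t)
    calc γ * (slope φ 0 t + κ * t) = γ * (φ t - φ 0 + κ * t ^ 2) / t := by
          rw [slope_def_field, sub_zero]; field_simp
      _ ≤ γ * (1 / γ * (t * φ' t)) / t := by gcongr; linarith
      _ = φ' t := by field_simp
  have hγa : γ * a ≤ a :=
    le_of_hasDerivWithinAt_Ioi_of_tendsto_of_eventually_le h0 hφ hlim hle
  nlinarith

section NormedSpace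

variable {E : Type*} [NormedAddCommGroup E] [NormedSpace ℝ E] {f : E → ℝ} {γ μ : ℝ} {xhat : E}

theorem fderiv_apply_nonneg_of_quasarConvex (hf : ∀ᶠ x in 𝓝 xhat, DifferentiableAt ℝ f x)
    (hγ0 : 0 < γ) (hγ1 : γ < 1)
    (h : ∀ᶠ x in 𝓝 xhat,
      f xhat ≥ f x + (1 / γ) * fderiv ℝ f x (xhat - x) + μ / 2 * ‖xhat - x‖ ^ 2) (v : E) :
    0 ≤ fderiv ℝ f xhat v := by
  have hderiv {t : ℝ} (ht : DifferentiableAt ℝ f (xhat + t • v)) :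
      HasDerivAt (fun s : ℝ ↦ f (xhat + s • v)) (fderiv ℝ f (xhat + t • v) v) t := by
    have hline : HasDerivAt (fun s : ℝ ↦ xhat + s • v) v t := by
      simpa using ((hasDerivAt_id t).smul_const v).const_add xhat
    exact ht.hasFDerivAt.comp_hasDerivAt t hline
  have hray : Tendsto (fun t : ℝ ↦ xhat + t • v) (𝓝[>] 0) (𝓝 xhat) := by
    have hcont : Continuous fun t : ℝ ↦ xhat + t • v := by fun_prop
    simpa using (hcont.tendsto 0).mono_left nhdsWithin_le_nhds
  have h0 : HasDerivAt (fun t : ℝ ↦ f (xhat + t • v)) (fderiv ℝ f xhat v) 0 := by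
    simpa using hderiv (t := 0) (by simpa using hf.self_of_nhds)
  refine nonneg_of_hasDerivWithinAt_Ioi_of_quasarConvex (κ := μ / 2 * ‖v‖ ^ 2)
    h0.hasDerivWithinAt ((hray.eventually hf).mono fun _ ↦ hderiv) hγ0 hγ1 ?_
  filter_upwards [hray.eventually h] with t ht
  simp only [sub_add_cancel_left, map_neg, map_smul, norm_neg, norm_smul, mul_pow,
    Real.norm_eq_abs, sq_abs, smul_eq_mul] at ht
  simp only [zero_smul, add_zero]
  linarith

theorem stmt_7_general (hf : ∀ᶠ x in 𝓝 xhat, DifferentiableAt ℝ f x)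
    (hγ0 : 0 < γ) (hγ1 : γ < 1)
    (h : ∀ᶠ x in 𝓝 xhat,
      f xhat ≥ f x + (1 / γ) * fderiv ℝ f x (xhat - x) + μ / 2 * ‖xhat - x‖ ^ 2) :
    fderiv ℝ f xhat = 0 := by
  ext v
  have hv := fderiv_apply_nonneg_of_quasarConvex hf hγ0 hγ1 h v
  have hneg := fderiv_apply_nonneg_of_quasarConvex hf hγ0 hγ1 h (-v)
  rw [map_neg, neg_nonneg] at hneg
  exact le_antisymm hneg hv

end NormedSpace

/-- if a `C¹` function `f` satisfies the `(γ,μ)`-strong quasar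
convexity inequality with respect to a point `x̂` for some `γ ∈ (0,1)`, then
`x̂` must be a critical point: `∇f(x̂) = 0`. -/
theorem stmt_7 {E : Type*} [NormedAddCommGroup E] [InnerProductSpace ℝ E]
    [FiniteDimensional ℝ E]
    (f : E → ℝ) (hf : ContDiff ℝ 1 f)
    (γ μ : ℝ) (hγ0 : 0 < γ) (hγ1 : γ < 1) (hμ : 0 < μ) (xhat : E)
    (h : ∀ x : E,
      f xhat ≥ f x + (1 / γ) * ⟪gradient f x, xhat - x⟫ + μ / 2 * ‖xhat - x‖ ^ 2) :
    gradient f xhat = 0 := by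
  simp only [gradient, InnerProductSpace.toDual_symm_apply, LinearIsometryEquiv.map_eq_zero_iff]
    at h ⊢
  exact stmt_7_general (.of_forall (hf.differentiable one_ne_zero)) hγ0 hγ1 (.of_forall h)
end

section
/- Let F = f + g where f : E → ℝ is L-smooth and (ρ,L)-curvatured for some ρ ≤ L, and g : E → ℝ is convex. Assume F has a minimizer x*_F and that f is (1,μ)-strongly quasar convex with respect to x*_F for some 0 < μ ≤ L, i.e. f(x*_F) ≥ f(x) + ⟨∇f(x), x*_F − x⟩ + (μ/2)‖x*_F − x‖² for all x. Let 0 < s ≤ 1/L and let (x_n, y_n, z_n) be generated by the proximal Algorithm 2 with z₀ = x₀ and constant parameters α = 1/(1 + √(μs)), β = 1 − √(μs), η = √(s/μ). If ρ ≥ −√(μ/s), then for all n ∈ ℕ, F(x_n) − F(x*_F) ≤ 2(1 − √(μs))ⁿ (F(x₀) − F(x*_F)). -/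
open scoped RealInnerProductSpace

/-!
With `q = √(μs)` and `G n = (y n - x (n + 1)) / s`, the energy
`F (x n) - F c + (μ / 2) ‖z n - c‖²` contracts by the factor `1 - q` at each step. The proximal
gradient inequality bounds `F (x (n + 1))` by the linearization of `F` at `y n`, compared once with
the minimizer `c` (weight `q`, quasar convexity) and once with `x n` (weight `1 - q`, lower
curvature). The terms linear in `G n` cancel those of `‖z (n + 1) - c‖²`, the terms in `‖G n‖²`
cancel because `μη² = s`, and what remains is
`-(q (1 - q) / 2) (μ + ρ q) ‖z n - y n‖²`, which is nonpositive when `ρ ≥ -√(μ/s)`.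

Since `z 0 = x 0`, the initial energy is at most `2 (F (x 0) - F c)` by quadratic growth of `F` at
its minimizer. For this, quasar convexity says that `t ↦ (f (c + t d) - f c) / t - (μ / 2) ‖d‖² t`
is monotone, so `f` lies above its strongly convex quadratic model at `c`, while minimality of `c`
makes `-∇f(c)` a subgradient of `g` at `c`.
-/

open Filter Set Topology

section Sqrt

variable {a b : ℝ}

theorem mul_sqrt_div (ha : 0 ≤ a) (b : ℝ) : a * √(b / a) = √(a * b) := by
  obtain rfl | ha := ha.eq_or_lt
  · simp
  · rw [show a * b = a ^ 2 * (b / a) by field_simp, Real.sqrt_mul (sq_nonneg a),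
      Real.sqrt_sq ha.le]

theorem sqrt_mul_mul_sqrt_div (ha : 0 ≤ a) (hb : 0 < b) : √(a * b) * √(a / b) = a := by
  rw [← Real.sqrt_mul (by positivity), show a * b * (a / b) = a ^ 2 by field_simp,
    Real.sqrt_sq ha]

theorem sqrt_mul_le_one (hb : 0 < b) (hab : a ≤ b) {s : ℝ} (hs0 : 0 ≤ s) (hs1 : s ≤ 1 / b) :
    √(a * s) ≤ 1 :=
  Real.sqrt_le_one.2 <|
    (mul_le_mul_of_nonneg_right hab hs0).trans ((le_div_iff₀' hb).1 hs1)

end Sqrt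

section RealLine

variable {h h' : ℝ → ℝ} {k : ℝ}

theorem monotoneOn_slope_sub_mul (hderiv : ∀ t, 0 < t → HasDerivAt h (h' t) t)
    (hle : ∀ t, 0 < t → h t - t * h' t + k * t ^ 2 ≤ h 0) :
    MonotoneOn (fun t ↦ (h t - h 0) / t - k * t) (Ioi 0) := by
  have hquot (t : ℝ) (ht : 0 < t) : HasDerivAt (fun t ↦ (h t - h 0) / t - k * t)
      ((h' t * t - (h t - h 0) * 1) / t ^ 2 - k * 1) t :=
    (((hderiv t ht).sub_const _).div (hasDerivAt_id t) ht.ne').sub ((hasDerivAt_id t).const_mul k)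
  refine monotoneOn_of_hasDerivWithinAt_nonneg (convex_Ioi 0)
    (fun t ht ↦ (hquot t ht).continuousAt.continuousWithinAt)
    (fun t ht ↦ (hquot t (interior_subset ht)).hasDerivWithinAt) fun t ht ↦ ?_
  have ht : 0 < t := interior_subset ht
  rw [sub_nonneg, le_div_iff₀ (by positivity)]
  linarith [hle t ht]

theorem add_mul_add_mul_sq_le_of_hasDerivAt (hderiv : ∀ t, 0 ≤ t → HasDerivAt h (h' t) t)
    (hle : ∀ t, 0 < t → h t - t * h' t + k * t ^ 2 ≤ h 0) {t : ℝ} (ht : 0 < t) :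
    h 0 + t * h' 0 + k * t ^ 2 ≤ h t := by
  have hmono := monotoneOn_slope_sub_mul (fun r hr ↦ hderiv r hr.le) hle
  have hlim : Tendsto (fun r ↦ (h r - h 0) / r - k * r) (𝓝[>] 0) (𝓝 (h' 0)) := by
    have hslope := (hderiv 0 le_rfl).tendsto_slope_zero_right
    have hlin : Tendsto (fun r : ℝ ↦ k * r) (𝓝[>] 0) (𝓝 (k * 0)) :=
      (tendsto_id.const_mul k).mono_left nhdsWithin_le_nhds
    simpa [div_eq_inv_mul] using hslope.sub hlin
  have hbound : h' 0 ≤ (h t - h 0) / t - k * t := by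
    refine le_of_tendsto hlim ?_
    filter_upwards [Ioc_mem_nhdsGT ht] with r hr using hmono hr.1 ht hr.2
  rw [le_sub_iff_add_le, le_div_iff₀ ht] at hbound
  linarith

end RealLine

theorem neg_lineDeriv_le_sub_of_isMinOn_add {E : Type*} [AddCommGroup E] [Module ℝ E] {φ g : E → ℝ}
    {S : Set E} {p w : E} {φ' : ℝ} (hg : ConvexOn ℝ S g) (hmin : IsMinOn (φ + g) S p)
    (hp : p ∈ S) (hw : w ∈ S) (hφ : HasLineDerivAt ℝ φ φ' p (w - p)) : -φ' ≤ g w - g p := by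
  suffices hslope : ∀ᶠ t in 𝓝[>] (0 : ℝ), -(g w - g p) ≤ t⁻¹ • (φ (p + t • (w - p)) - φ p) by
    linarith [ge_of_tendsto hφ.tendsto_slope_zero_right hslope]
  filter_upwards [Ioc_mem_nhdsGT one_pos] with t ⟨ht0, ht1⟩
  have hsegment : p + t • (w - p) = (1 - t) • p + t • w := by module
  have hconv : g (p + t • (w - p)) ≤ (1 - t) * g p + t * g w := by
    simpa only [hsegment, smul_eq_mul] using
      hg.2 hp hw (sub_nonneg.2 ht1) ht0.le (sub_add_cancel 1 t)
  have hle : φ p + g p ≤ φ (p + t • (w - p)) + g (p + t • (w - p)) :=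
    hmin (hsegment ▸ hg.1 hp hw (sub_nonneg.2 ht1) ht0.le (sub_add_cancel 1 t))
  rw [smul_eq_mul, inv_mul_eq_div, le_div_iff₀ ht0]
  linarith

section InnerProductSpace

variable {E : Type*} [NormedAddCommGroup E] [InnerProductSpace ℝ E]

/-- `(a, L)`-curvature of `f`, whose gradient is given as a vector field `f'`: the error of the
first-order model of `f` at any point lies between two quadratics. -/
def IsCurvatured (f : E → ℝ) (f' : E → E) (a L : ℝ) : Prop :=
  ∀ x y, f x + ⟪f' x, y - x⟫ + a / 2 * ‖x - y‖ ^ 2 ≤ f y ∧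
    f y ≤ f x + ⟪f' x, y - x⟫ + L / 2 * ‖x - y‖ ^ 2

/-- `(1, μ)`-strong quasar convexity of `f` with respect to `c`: the lower bound of `μ`-strong
convexity, required only for comparison with the single point `c`. The gradient of `f` is given as
a vector field `f'`. -/
def IsStronglyQuasarConvexAt (f : E → ℝ) (f' : E → E) (μ : ℝ) (c : E) : Prop :=
  ∀ x, f x + ⟪f' x, c - x⟫ + μ / 2 * ‖c - x‖ ^ 2 ≤ f c

/-- `p` is a proximal point of `s g` at `u`. As a relation it requires no choice of a minimizer. -/
def IsProx (s : ℝ) (g : E → ℝ) (u p : E) : Prop :=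
  ∀ w, g p + 1 / (2 * s) * ‖u - p‖ ^ 2 ≤ g w + 1 / (2 * s) * ‖u - w‖ ^ 2

/-- The energy of the accelerated method at the iterates `x`, `z`, measured from the reference
point `c`. -/
noncomputable def lyapunov (F : E → ℝ) (μ : ℝ) (c x z : E) : ℝ :=
  F x - F c + μ / 2 * ‖z - c‖ ^ 2

variable {f g : E → ℝ} {f' : E → E} {μ ρ L s : ℝ} {c : E}

theorem norm_convexComb_sq (t : ℝ) (a b : E) :
    ‖(1 - t) • a + t • b‖ ^ 2 = (1 - t) * ‖a‖ ^ 2 + t * ‖b‖ ^ 2 - t * (1 - t) * ‖a - b‖ ^ 2 := by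
  rw [norm_add_sq_real, norm_sub_sq_real, real_inner_smul_left, real_inner_smul_right, norm_smul,
    norm_smul, mul_pow, mul_pow, Real.norm_eq_abs, Real.norm_eq_abs, sq_abs, sq_abs]
  ring

theorem norm_convexComb_sub_smul_sub_sq (q η : ℝ) (c y z G : E) :
    ‖(1 - q) • z + q • y - η • G - c‖ ^ 2 =
      (1 - q) * ‖z - c‖ ^ 2 + q * ‖y - c‖ ^ 2 - q * (1 - q) * ‖z - y‖ ^ 2
        - 2 * η * (⟪G, y - c⟫ + (1 - q) * ⟪G, z - y⟫) + η ^ 2 * ‖G‖ ^ 2 := by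
  have hinner : ⟪(1 - q) • (z - c) + q • (y - c), G⟫ = ⟪G, y - c⟫ + (1 - q) * ⟪G, z - y⟫ := by
    rw [show (1 - q) • (z - c) + q • (y - c) = (y - c) + (1 - q) • (z - y) by module,
      real_inner_comm, inner_add_right, real_inner_smul_right]
  rw [show (1 - q) • z + q • y - η • G - c = (1 - q) • (z - c) + q • (y - c) - η • G by module,
    norm_sub_sq_real, norm_convexComb_sq, sub_sub_sub_cancel_right, real_inner_smul_right,
    hinner, norm_smul, mul_pow, Real.norm_eq_abs, sq_abs]
  ring

theorem hasLineDerivAt_norm_sub_sq (u p d : E) :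
    HasLineDerivAt ℝ (fun w ↦ ‖u - w‖ ^ 2) (-(2 * ⟪u - p, d⟫)) p d := by
  have hline : HasDerivAt (fun t : ℝ ↦ u - (p + t • d)) (-d) 0 := by
    simpa using (((hasDerivAt_id (0 : ℝ)).smul_const d).const_add p).const_sub u
  simpa [HasLineDerivAt] using hline.norm_sq

theorem IsStronglyQuasarConvexAt.add_inner_add_norm_sq_le
    (hqc : IsStronglyQuasarConvexAt f f' μ c)
    (hf : ∀ x v, HasLineDerivAt ℝ f ⟪f' x, v⟫ x v) (x : E) :
    f c + ⟪f' c, x - c⟫ + μ / 2 * ‖x - c‖ ^ 2 ≤ f x := by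
  have hderiv (t : ℝ) : HasDerivAt (fun t : ℝ ↦ f (c + t • (x - c)))
      ⟪f' (c + t • (x - c)), x - c⟫ t := by
    have hline := hf (c + t • (x - c)) (x - c)
    rw [HasLineDerivAt, ← sub_self t] at hline
    exact (hline.comp_sub_const t t).congr_of_eventuallyEq (.of_forall fun r ↦
      congrArg f (by module))
  have hle (t : ℝ) : f (c + t • (x - c)) - t * ⟪f' (c + t • (x - c)), x - c⟫
      + μ / 2 * ‖x - c‖ ^ 2 * t ^ 2 ≤ f (c + (0 : ℝ) • (x - c)) := by
    have hray := hqc (c + t • (x - c))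
    rw [sub_add_cancel_left, inner_neg_right, real_inner_smul_right, norm_neg, norm_smul, mul_pow,
      Real.norm_eq_abs, sq_abs] at hray
    rw [zero_smul, add_zero]
    linarith
  simpa using add_mul_add_mul_sq_le_of_hasDerivAt (fun t _ ↦ hderiv t) (fun t _ ↦ hle t) one_pos

theorem IsStronglyQuasarConvexAt.quadratic_growth (hqc : IsStronglyQuasarConvexAt f f' μ c)
    (hf : ∀ x v, HasLineDerivAt ℝ f ⟪f' x, v⟫ x v) (hg : ConvexOn ℝ univ g)
    (hmin : ∀ x, f c + g c ≤ f x + g x) (x : E) :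
    μ / 2 * ‖x - c‖ ^ 2 ≤ (f x + g x) - (f c + g c) := by
  have hsubgrad : -⟪f' c, x - c⟫ ≤ g x - g c :=
    neg_lineDeriv_le_sub_of_isMinOn_add hg (fun w _ ↦ hmin w) (mem_univ c) (mem_univ x) (hf c _)
  linarith [hqc.add_inner_add_norm_sq_le hf x]

theorem IsProx.inner_le {u p : E} (hp : IsProx s g u p) (hg : ConvexOn ℝ univ g) (w : E) :
    s⁻¹ * ⟪u - p, w - p⟫ ≤ g w - g p := by
  have hderiv : HasLineDerivAt ℝ (fun w ↦ 1 / (2 * s) * ‖u - w‖ ^ 2)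
      (1 / (2 * s) * -(2 * ⟪u - p, w - p⟫)) p (w - p) :=
    (hasLineDerivAt_norm_sub_sq u p (w - p)).const_mul _
  have hmin : IsMinOn ((fun w ↦ 1 / (2 * s) * ‖u - w‖ ^ 2) + g) univ p :=
    fun w _ ↦ show _ + g p ≤ _ + g w by simpa only [add_comm] using hp w
  convert neg_lineDeriv_le_sub_of_isMinOn_add hg hmin (mem_univ p) (mem_univ w) hderiv using 1
  ring

/-- The vector `G` is the gradient mapping `(y - x⁺) / s` of the step `y ↦ x⁺`. -/
theorem IsProx.add_le_of_gradient_step {y v G : E} (hp : IsProx s g (y - s • v) (y - s • G))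
    (hg : ConvexOn ℝ univ g) (hs : 0 < s) (hLs : L * s ≤ 1)
    (hdesc : f (y - s • G) ≤ f y + ⟪v, y - s • G - y⟫ + L / 2 * ‖y - (y - s • G)‖ ^ 2) (w : E) :
    f (y - s • G) + g (y - s • G) ≤
      f y + ⟪v, w - y⟫ + g w - ⟪G, w - y⟫ - s / 2 * ‖G‖ ^ 2 := by
  have hsubgrad : ⟪G - v, w - y⟫ + s * ⟪G - v, G⟫ ≤ g w - g (y - s • G) := by
    convert hp.inner_le hg w using 1
    rw [show y - s • v - (y - s • G) = s • (G - v) by module,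
      show w - (y - s • G) = w - y + s • G by module, real_inner_smul_left,
      inv_mul_cancel_left₀ hs.ne', inner_add_right, real_inner_smul_right]
  have hdescent : f (y - s • G) ≤ f y - s * ⟪v, G⟫ + s / 2 * ‖G‖ ^ 2 := by
    rw [sub_sub_cancel_left, inner_neg_right, real_inner_smul_right, sub_sub_cancel, norm_smul,
      mul_pow, Real.norm_eq_abs, sq_abs] at hdesc
    linarith [mul_le_mul_of_nonneg_right hLs (by positivity : 0 ≤ s / 2 * ‖G‖ ^ 2)]
  rw [inner_sub_left, inner_sub_left, real_inner_self_eq_norm_sq] at hsubgrad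
  linarith

theorem lyapunov_le_of_accelerated_step {q η : ℝ} {x y z G : E}
    (hcurv : IsCurvatured f f' ρ L) (hqc : IsStronglyQuasarConvexAt f f' μ c)
    (hg : ConvexOn ℝ univ g) (hs : 0 < s) (hLs : L * s ≤ 1) (hq0 : 0 ≤ q) (hq1 : q ≤ 1)
    (hμη : μ * η = q) (hqη : q * η = s) (hρ : 0 ≤ μ + ρ * q)
    (hy : y - x = q • (z - y)) (hG : IsProx s g (y - s • f' y) (y - s • G)) :
    lyapunov (f + g) μ c (y - s • G) ((1 - q) • z + q • y - η • G) ≤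
      (1 - q) * lyapunov (f + g) μ c x z := by
  have hstep := hG.add_le_of_gradient_step hg hs hLs (hcurv y (y - s • G)).2
  have hatc : f (y - s • G) + g (y - s • G) ≤
      f c + g c - μ / 2 * ‖y - c‖ ^ 2 + ⟪G, y - c⟫ - s / 2 * ‖G‖ ^ 2 := by
    have hqcy := hqc y
    rw [norm_sub_rev] at hqcy
    have hstepc := hstep c
    rw [← neg_sub y c, inner_neg_right G] at hstepc
    rw [← neg_sub y c] at hqcy
    linarith
  have hatx : f (y - s • G) + g (y - s • G) ≤
      f x + g x - ρ / 2 * q ^ 2 * ‖z - y‖ ^ 2 + q * ⟪G, z - y⟫ - s / 2 * ‖G‖ ^ 2 := by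
    have hcurvx := (hcurv y x).1
    rw [hy, norm_smul, mul_pow, Real.norm_eq_abs, sq_abs] at hcurvx
    have hstepx := hstep x
    rw [← neg_sub y x, hy, inner_neg_right G, real_inner_smul_right] at hstepx
    rw [← neg_sub y x, hy] at hcurvx
    linarith
  have hdist : μ / 2 * ‖(1 - q) • z + q • y - η • G - c‖ ^ 2 =
      μ / 2 * ((1 - q) * ‖z - c‖ ^ 2 + q * ‖y - c‖ ^ 2 - q * (1 - q) * ‖z - y‖ ^ 2)
        - q * ⟪G, y - c⟫ - q * (1 - q) * ⟪G, z - y⟫ + s / 2 * ‖G‖ ^ 2 := by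
    rw [norm_convexComb_sub_smul_sub_sq, ← hqη, ← hμη]
    ring
  have hweight : 0 ≤ 1 - q := sub_nonneg.2 hq1
  have hcross : 0 ≤ q * (1 - q) / 2 * (μ + ρ * q) * ‖z - y‖ ^ 2 := by positivity
  simp only [lyapunov, Pi.add_apply]
  linarith [mul_le_mul_of_nonneg_left hatc hq0, mul_le_mul_of_nonneg_left hatx hweight]

theorem sub_eq_smul_sub_of_eq_convexComb {q : ℝ} (hq : 1 + q ≠ 0) {x y z : E}
    (hy : y = (1 / (1 + q)) • x + (1 - 1 / (1 + q)) • z) : y - x = q • (z - y) := by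
  rw [hy]
  match_scalars <;> field_simp <;> ring

theorem lyapunov_le_pow_mul {x y z : ℕ → E} (hcurv : IsCurvatured f f' ρ L)
    (hqc : IsStronglyQuasarConvexAt f f' μ c) (hg : ConvexOn ℝ univ g) (hμ : 0 < μ) (hμL : μ ≤ L)
    (hs0 : 0 < s) (hs1 : s ≤ 1 / L) (hρ : -√(μ / s) ≤ ρ)
    (hy : ∀ n, y n = (1 / (1 + √(μ * s))) • x n + (1 - 1 / (1 + √(μ * s))) • z n)
    (hx : ∀ n, IsProx s g (y n - s • f' (y n)) (x (n + 1)))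
    (hz : ∀ n, z (n + 1) = (1 - √(μ * s)) • z n + √(μ * s) • y n
      - (√(s / μ) / s) • (y n - x (n + 1))) (n : ℕ) :
    lyapunov (f + g) μ c (x n) (z n) ≤
      (1 - √(μ * s)) ^ n * lyapunov (f + g) μ c (x 0) (z 0) := by
  have hL : 0 < L := hμ.trans_le hμL
  have hq1 : √(μ * s) ≤ 1 := sqrt_mul_le_one hL hμL hs0.le hs1
  have hqη : √(μ * s) * √(s / μ) = s := by
    rw [mul_comm μ s, sqrt_mul_mul_sqrt_div hs0.le hμ]
  have hρq : 0 ≤ μ + ρ * √(μ * s) := by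
    linarith [mul_le_mul_of_nonneg_right hρ (Real.sqrt_nonneg (μ * s)),
      sqrt_mul_mul_sqrt_div hμ.le hs0]
  refine le_geom (u := fun n ↦ lyapunov (f + g) μ c (x n) (z n)) (sub_nonneg.2 hq1) n fun k _ ↦ ?_
  have hxG : x (k + 1) = y k - s • s⁻¹ • (y k - x (k + 1)) := by
    rw [smul_inv_smul₀ hs0.ne', sub_sub_cancel]
  have hzG : z (k + 1) = (1 - √(μ * s)) • z k + √(μ * s) • y k
      - √(s / μ) • s⁻¹ • (y k - x (k + 1)) := by
    rw [hz k, smul_smul, div_eq_mul_inv]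
  rw [hxG, hzG]
  exact lyapunov_le_of_accelerated_step hcurv hqc hg hs0 ((le_div_iff₀' hL).1 hs1)
    (Real.sqrt_nonneg _) hq1 (mul_sqrt_div hμ.le s) hqη hρq
    (sub_eq_smul_sub_of_eq_convexComb (by positivity) (hy k))
    (hxG ▸ hx k)

theorem stmt_8_general {x y z : ℕ → E} (hf : ∀ x v, HasLineDerivAt ℝ f ⟪f' x, v⟫ x v)
    (hcurv : IsCurvatured f f' ρ L) (hqc : IsStronglyQuasarConvexAt f f' μ c)
    (hg : ConvexOn ℝ univ g) (hmin : ∀ x, f c + g c ≤ f x + g x) (hμ : 0 < μ) (hμL : μ ≤ L)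
    (hs0 : 0 < s) (hs1 : s ≤ 1 / L) (hρ : -√(μ / s) ≤ ρ) (hz0 : z 0 = x 0)
    (hy : ∀ n, y n = (1 / (1 + √(μ * s))) • x n + (1 - 1 / (1 + √(μ * s))) • z n)
    (hx : ∀ n, IsProx s g (y n - s • f' (y n)) (x (n + 1)))
    (hz : ∀ n, z (n + 1) = (1 - √(μ * s)) • z n + √(μ * s) • y n
      - (√(s / μ) / s) • (y n - x (n + 1))) (n : ℕ) :
    (f (x n) + g (x n)) - (f c + g c) ≤
      2 * (1 - √(μ * s)) ^ n * ((f (x 0) + g (x 0)) - (f c + g c)) := by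
  have hgrowth := hqc.quadratic_growth hf hg hmin (x 0)
  have hrate : 0 ≤ 1 - √(μ * s) :=
    sub_nonneg.2 (sqrt_mul_le_one (hμ.trans_le hμL) hμL hs0.le hs1)
  calc (f (x n) + g (x n)) - (f c + g c)
    _ ≤ lyapunov (f + g) μ c (x n) (z n) := le_add_of_nonneg_right (by positivity)
    _ ≤ (1 - √(μ * s)) ^ n * lyapunov (f + g) μ c (x 0) (z 0) :=
      lyapunov_le_pow_mul hcurv hqc hg hμ hμL hs0 hs1 hρ hy hx hz n
    _ ≤ (1 - √(μ * s)) ^ n * (2 * ((f (x 0) + g (x 0)) - (f c + g c))) := by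
      gcongr
      simp only [lyapunov, Pi.add_apply, hz0]
      linarith
    _ = 2 * (1 - √(μ * s)) ^ n * ((f (x 0) + g (x 0)) - (f c + g c)) := by ring

end InnerProductSpace

/-- accelerated linear convergence of the proximal Nesterov
accelerated gradient algorithm (Algorithm 2) for composite functions
`F = f + g` with `f` `L`-smooth, `(ρ,L)`-curvatured and `(1,μ)`-strongly quasar
convex with respect to a minimizer of `F`, and `g` convex, provided
`ρ ≥ -√(μ/s)`.  Here `prox` is the proximal operator of `sg`. -/
theorem stmt_8 {E : Type*} [NormedAddCommGroup E] [InnerProductSpace ℝ E]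
    [FiniteDimensional ℝ E]
    (f g : E → ℝ) (hf : Differentiable ℝ f)
    (L μ ρ s : ℝ) (hμ : 0 < μ) (hμL : μ ≤ L) (hρL : ρ ≤ L)
    (hLip : ∀ x y : E, ‖gradient f x - gradient f y‖ ≤ L * ‖x - y‖)
    (hcurv : ∀ x y : E,
      f x + ⟪gradient f x, y - x⟫ + ρ / 2 * ‖x - y‖ ^ 2 ≤ f y ∧
      f y ≤ f x + ⟪gradient f x, y - x⟫ + L / 2 * ‖x - y‖ ^ 2)
    (hg : ConvexOn ℝ Set.univ g)
    (xstarF : E) (hmin : ∀ x : E, f xstarF + g xstarF ≤ f x + g x)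
    (hqc : ∀ x : E,
      f xstarF ≥ f x + ⟪gradient f x, xstarF - x⟫ + μ / 2 * ‖xstarF - x‖ ^ 2)
    (hs0 : 0 < s) (hs1 : s ≤ 1 / L)
    (hρ : ρ ≥ -Real.sqrt (μ / s))
    (prox : E → E)
    (hproxmin : ∀ u w : E,
      g (prox u) + 1 / (2 * s) * ‖u - prox u‖ ^ 2 ≤ g w + 1 / (2 * s) * ‖u - w‖ ^ 2)
    (hproxuniq : ∀ u w : E,
      (∀ w' : E, g w + 1 / (2 * s) * ‖u - w‖ ^ 2 ≤ g w' + 1 / (2 * s) * ‖u - w'‖ ^ 2) →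
      w = prox u)
    (x y z : ℕ → E) (hz0 : z 0 = x 0)
    (hy : ∀ n : ℕ, y n = (1 / (1 + Real.sqrt (μ * s))) • x n
      + (1 - 1 / (1 + Real.sqrt (μ * s))) • z n)
    (hx : ∀ n : ℕ, x (n + 1) = prox (y n - s • gradient f (y n)))
    (hz : ∀ n : ℕ, z (n + 1) = (1 - Real.sqrt (μ * s)) • z n
      + (Real.sqrt (μ * s)) • y n
      - (Real.sqrt (s / μ) / s) • (y n - prox (y n - s • gradient f (y n)))) :
    ∀ n : ℕ, (f (x n) + g (x n)) - (f xstarF + g xstarF)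
      ≤ 2 * (1 - Real.sqrt (μ * s)) ^ n * ((f (x 0) + g (x 0)) - (f xstarF + g xstarF)) := by
  refine stmt_8_general (fun u v ↦ ?_) hcurv hqc hg hmin hμ hμL hs0 hs1 hρ hz0 hy
    (fun n ↦ hx n ▸ hproxmin _) fun n ↦ hx n ▸ hz n
  simpa using (hf u).hasGradientAt.hasFDerivAt.hasLineDerivAt v
end

section
/- Let F : E → ℝ be L-smooth and μ-Polyak-Łojasiewicz for some 0 < μ ≤ L, with a unique minimizer x*. Assume F satisfies the uniform acute angle condition with constant a ∈ (0,1]: for all x ≠ x*, ⟨∇F(x), x − x*⟩ ≥ a‖∇F(x)‖·‖x − x*‖. Then for every γ with 0 < γ < 2μa/L, the function F is (γ, μa/γ − L/2)-strongly quasar convex with respect to x*. -/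
open scoped RealInnerProductSpace

/-!
Along the square root of the gap, `g = √(F - min F)`, the Polyak-Łojasiewicz inequality reads
`‖g'‖ ≥ √(μ / 2)` wherever `g > 0`. Ekeland's variational principle, started at `x` with slope
`c < √(μ / 2)`, stops at a point `y` where `‖g'‖ ≤ c`; so `g y = 0`, and the distance covered is
at most `g x / c`. Letting `c → √(μ / 2)` gives quadratic growth, hence `μ D ≤ G` for
`D = ‖x - x*‖` and `G = ‖∇F x‖`. Since also `F x - min F ≤ G² / (2μ)` and `G ≤ L D`, the acute angle
condition `⟪∇F x, x - x*⟫ ≥ a G D` reduces the theorem to an inequality between `G` and `D`.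
-/

open Filter Topology

section Ekeland

variable {X : Type*}

/-- The Bishop-Phelps preorder of Ekeland's variational principle: `z` can be reached from `y`
with a decrease of `f` of at least `c` per unit of distance. -/
def DescendsTo [PseudoMetricSpace X] (f : X → ℝ) (c : ℝ) (y z : X) : Prop :=
  f z + c * dist y z ≤ f y

namespace DescendsTo

variable [PseudoMetricSpace X] {f : X → ℝ} {c : ℝ} {x y z : X}

lemma refl (f : X → ℝ) (c : ℝ) (x : X) : DescendsTo f c x x := by
  simp [DescendsTo]

lemma trans (hc : 0 ≤ c) (hxy : DescendsTo f c x y) (hyz : DescendsTo f c y z) :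
    DescendsTo f c x z := by
  have htri := mul_le_mul_of_nonneg_left (dist_triangle x y z) hc
  unfold DescendsTo at *
  linarith

lemma apply_le (hc : 0 ≤ c) (hxy : DescendsTo f c x y) : f y ≤ f x :=
  (le_add_of_nonneg_right (by positivity)).trans hxy

lemma isClosed_setOf (hf : LowerSemicontinuous f) (c : ℝ) (y : X) :
    IsClosed {z | DescendsTo f c y z} := by
  have hdist : Continuous fun z => c * dist y z := by fun_prop
  exact (hf.add hdist.lowerSemicontinuous).isClosed_preimage (f y)

lemma exists_half_maximal_decrease (hbdd : BddBelow (Set.range f)) (y : X) :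
    ∃ z, DescendsTo f c y z ∧ ∀ w, DescendsTo f c y w → f z - f w ≤ f y - f z := by
  set values : Set ℝ := f '' {w | DescendsTo f c y w}
  have hvalues : BddBelow values := hbdd.mono (Set.image_subset_range _ _)
  have hy : f y ∈ values := ⟨y, refl f c y, rfl⟩
  have hinf {w : X} (hw : DescendsTo f c y w) : sInf values ≤ f w :=
    csInf_le hvalues ⟨w, hw, rfl⟩
  rcases (csInf_le hvalues hy).eq_or_lt with heq | hlt
  · exact ⟨y, refl f c y, fun w hw => by linarith [hinf hw]⟩
  · obtain ⟨_, ⟨z, hz, rfl⟩, hlt_mid⟩ :=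
      exists_lt_of_csInf_lt ⟨f y, hy⟩ (show sInf values < (f y + sInf values) / 2 by linarith)
    exact ⟨z, hz, fun w hw => by linarith [hinf hw]⟩

lemma cauchySeq {y : ℕ → X} {l : ℝ} (hc : 0 < c)
    (hlim : Tendsto (fun n => f (y n)) atTop (𝓝 l))
    (hy : ∀ n m, n ≤ m → DescendsTo f c (y n) (y m)) : CauchySeq y := by
  have hanti : Antitone fun n => f (y n) := fun n m hnm => (hy n m hnm).apply_le hc.le
  refine cauchySeq_of_le_tendsto_0' (fun n => (f (y n) - l) / c) (fun n m hnm => ?_) ?_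
  · rw [le_div_iff₀ hc, mul_comm]
    exact le_sub_iff_add_le'.2 ((add_le_add_left (hanti.le_of_tendsto hlim m) _).trans (hy n m hnm))
  · simpa using (hlim.sub_const l).div_const c

end DescendsTo

theorem ekeland_variational_principle [MetricSpace X] [CompleteSpace X] {f : X → ℝ}
    {c : ℝ} (hf : LowerSemicontinuous f) (hbdd : BddBelow (Set.range f)) (hc : 0 < c) (x : X) :
    ∃ y, DescendsTo f c x y ∧ ∀ z, DescendsTo f c y z → z = y := by
  choose next hnext hhalf using DescendsTo.exists_half_maximal_decrease (c := c) hbdd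
  let y (n : ℕ) : X := next^[n] x
  have hy_succ (n : ℕ) : y (n + 1) = next (y n) := Function.iterate_succ_apply' next n x
  have hy (n m : ℕ) (hnm : n ≤ m) : DescendsTo f c (y n) (y m) := by
    induction m, hnm using Nat.le_induction with
    | base => exact DescendsTo.refl f c (y n)
    | succ m _ ih => exact ih.trans hc.le (hy_succ m ▸ hnext (y m))
  have hy_bdd : BddBelow (Set.range fun n => f (y n)) :=
    hbdd.mono (Set.range_comp_subset_range y f)
  have hlim := tendsto_atTop_ciInf (fun n m hnm => (hy n m hnm).apply_le hc.le) hy_bdd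
  obtain ⟨ybar, hybar⟩ :=
    cauchySeq_tendsto_of_complete (DescendsTo.cauchySeq (f := f) hc hlim hy)
  have hy_ybar (n : ℕ) : DescendsTo f c (y n) ybar :=
    (DescendsTo.isClosed_setOf hf c (y n)).mem_of_tendsto hybar (eventually_atTop.2 ⟨n, hy n⟩)
  refine ⟨ybar, hy_ybar 0, fun z hz => ?_⟩
  have hle_z : f ybar ≤ f z := by
    have hstep (n : ℕ) : f ybar - f z ≤ f (y n) - f (y (n + 1)) := by
      have hmax := hhalf (y n) z ((hy_ybar n).trans hc.le hz)
      rw [← hy_succ] at hmax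
      linarith [(hy_ybar (n + 1)).apply_le hc.le]
    have hzero := hlim.sub (hlim.comp (tendsto_add_atTop_nat 1))
    rw [sub_self] at hzero
    exact sub_nonpos.1 (ge_of_tendsto' hzero hstep)
  have hdist : c * dist ybar z ≤ 0 := by
    unfold DescendsTo at hz
    linarith
  exact (dist_le_zero.1 (nonpos_of_mul_nonpos_right hdist hc)).symm

end Ekeland

section NormedSpace

variable {E : Type*} [NormedAddCommGroup E] [NormedSpace ℝ E]

lemma norm_le_of_hasFDerivAt_of_eventually_le_add {f : E → ℝ} {f' : E →L[ℝ] ℝ} {y : E} {c : ℝ}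
    (hf : HasFDerivAt f f' y) (hc : 0 ≤ c) (hslope : ∀ᶠ z in 𝓝 y, f y ≤ f z + c * dist y z) :
    ‖f'‖ ≤ c := by
  refine le_of_forall_pos_le_add fun ε hε => ?_
  have hlower : ∀ᶠ w in 𝓝 (0 : E), -((c + ε) * ‖w‖) ≤ f' w := by
    have hadd : Tendsto (fun w => y + w) (𝓝 0) (𝓝 y) := by
      simpa using tendsto_const_nhds.add (tendsto_id (α := E) (x := 𝓝 0))
    filter_upwards [hadd.eventually hslope,
      (hasFDerivAt_iff_isLittleO_nhds_zero.1 hf).def hε] with w hw hw'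
    rw [dist_self_add_right] at hw
    linarith [le_of_abs_le hw']
  refine ContinuousLinearMap.opNorm_le_of_nhds_zero (by positivity) ?_
  have hneg : Tendsto (fun w : E => -w) (𝓝 0) (𝓝 0) := by
    simpa using (continuous_neg (G := E)).tendsto 0
  filter_upwards [hlower, hneg.eventually hlower] with w hw hw'
  rw [norm_neg, map_neg] at hw'
  exact abs_le.2 ⟨hw, neg_le_neg_iff.1 hw'⟩

/-- The Polyak-Łojasiewicz inequality with constant `μ` and lower value `m`. It is stated with the
dual norm of the Fréchet derivative, which in a Hilbert space is the norm of the gradient. -/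
def PolyakLojasiewicz (F : E → ℝ) (m μ : ℝ) : Prop :=
  ∀ x, F x - m ≤ 1 / (2 * μ) * ‖fderiv ℝ F x‖ ^ 2

namespace PolyakLojasiewicz

variable {F : E → ℝ} {m μ c : ℝ}

lemma sqrt_le_norm_fderiv_sqrt (hPL : PolyakLojasiewicz F m μ) (hμ : 0 < μ) {y : E}
    (hF : DifferentiableAt ℝ F y) (hy : m < F y) :
    √(μ / 2) ≤ ‖fderiv ℝ (fun z => √(F z - m)) y‖ := by
  have hgap : 0 < F y - m := sub_pos.2 hy
  have hPLy := hPL y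
  rw [((hF.hasFDerivAt.sub_const m).sqrt hgap.ne').fderiv, norm_smul,
    Real.norm_of_nonneg (by positivity)]
  rw [one_div, inv_mul_eq_div, le_div_iff₀ (by positivity)] at hPLy
  refine Real.sqrt_le_iff.2 ⟨by positivity, ?_⟩
  rw [mul_pow, div_pow, mul_pow, Real.sq_sqrt hgap.le, div_mul_eq_mul_div,
    le_div_iff₀ (by positivity)]
  linarith

variable [CompleteSpace E]

theorem exists_eq_and_mul_dist_le_sqrt (hPL : PolyakLojasiewicz F m μ) (hF : Differentiable ℝ F)
    (hm : ∀ x, m ≤ F x) (hc : 0 < c) (hcμ : c < √(μ / 2)) (x : E) :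
    ∃ y, F y = m ∧ c * dist x y ≤ √(F x - m) := by
  have hμ : 0 < μ := by linarith [Real.sqrt_pos.1 (hc.trans hcμ)]
  set g : E → ℝ := fun z => √(F z - m)
  have hg : Continuous g := (hF.continuous.sub continuous_const).sqrt
  have hg_nonneg (z : E) : 0 ≤ g z := Real.sqrt_nonneg _
  obtain ⟨y, hxy, hy⟩ := ekeland_variational_principle
    hg.lowerSemicontinuous ⟨0, Set.forall_mem_range.2 hg_nonneg⟩ hc x
  refine ⟨y, ?_, (le_add_of_nonneg_left (hg_nonneg y)).trans hxy⟩
  by_contra hne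
  have hgap : m < F y := (hm y).lt_of_ne' hne
  have hslope (z : E) : g y ≤ g z + c * dist y z := by
    by_contra! hlt
    rw [hy z hlt.le, dist_self, mul_zero, add_zero] at hlt
    exact hlt.false
  have hg_diff : DifferentiableAt ℝ g y := ((hF y).sub_const m).sqrt (sub_pos.2 hgap).ne'
  exact hcμ.not_ge <| (hPL.sqrt_le_norm_fderiv_sqrt hμ (hF y) hgap).trans <|
    norm_le_of_hasFDerivAt_of_eventually_le_add hg_diff.hasFDerivAt hc.le (.of_forall hslope)

theorem quadratic_growth (hPL : PolyakLojasiewicz F m μ) (hF : Differentiable ℝ F)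
    (hm : ∀ x, m ≤ F x) (hμ : 0 < μ) (x : E) :
    μ / 2 * Metric.infDist x {y | F y = m} ^ 2 ≤ F x - m := by
  set d := Metric.infDist x {y | F y = m}
  have hbound : ∀ᶠ c in 𝓝[<] √(μ / 2), c * d ≤ √(F x - m) := by
    filter_upwards [Ioo_mem_nhdsLT (Real.sqrt_pos.2 (half_pos hμ))] with c ⟨hc, hcμ⟩
    obtain ⟨y, hy, hdist⟩ := hPL.exists_eq_and_mul_dist_le_sqrt hF hm hc hcμ x
    have hd : d ≤ dist x y := Metric.infDist_le_dist_of_mem hy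
    exact (mul_le_mul_of_nonneg_left hd hc.le).trans hdist
  have hcont : Tendsto (fun c => c * d) (𝓝[<] √(μ / 2)) (𝓝 (√(μ / 2) * d)) :=
    (continuous_mul_const d).continuousWithinAt
  have hsqrt : √(μ / 2) * d ≤ √(F x - m) := le_of_tendsto hcont hbound
  calc μ / 2 * d ^ 2 = (√(μ / 2) * d) ^ 2 := by rw [mul_pow, Real.sq_sqrt (by positivity)]
    _ ≤ √(F x - m) ^ 2 :=
        pow_le_pow_left₀ (mul_nonneg (Real.sqrt_nonneg _) Metric.infDist_nonneg) hsqrt 2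
    _ = F x - m := Real.sq_sqrt (sub_nonneg.2 (hm x))

theorem mul_infDist_le_norm_fderiv (hPL : PolyakLojasiewicz F m μ) (hF : Differentiable ℝ F)
    (hm : ∀ x, m ≤ F x) (hμ : 0 < μ) (x : E) :
    μ * Metric.infDist x {y | F y = m} ≤ ‖fderiv ℝ F x‖ := by
  refine le_of_sq_le_sq ?_ (norm_nonneg _)
  have hsq := (hPL.quadratic_growth hF hm hμ x).trans (hPL x)
  rw [one_div, inv_mul_eq_div, le_div_iff₀ (by positivity)] at hsq
  linarith

end PolyakLojasiewicz

end NormedSpace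

section Gradient

variable {E : Type*} [NormedAddCommGroup E] [InnerProductSpace ℝ E] [CompleteSpace E]

lemma norm_gradient_eq_norm_fderiv (F : E → ℝ) (x : E) : ‖gradient F x‖ = ‖fderiv ℝ F x‖ :=
  (InnerProductSpace.toDual ℝ E).symm.norm_map _

lemma gradient_eq_zero_of_isLocalMin {F : E → ℝ} {x : E} (hx : IsLocalMin F x) :
    gradient F x = 0 := by
  rw [gradient, hx.fderiv_eq_zero, map_zero]

end Gradient

lemma gap_le_of_linear_growth {G D δ μ L t : ℝ} (hμ : 0 < μ) (hD : 0 ≤ D) (hlow : μ * D ≤ G)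
    (hup : G ≤ L * D) (hgap : δ ≤ 1 / (2 * μ) * G ^ 2) (ht : L / (2 * μ) ≤ t) :
    δ ≤ t * (G * D) - (μ * t - L / 2) / 2 * D ^ 2 := by
  have hG : 0 ≤ G := (mul_nonneg hμ.le hD).trans hlow
  have hcoef : 0 ≤ G * D - μ / 2 * D ^ 2 := by
    nlinarith [mul_le_mul_of_nonneg_right hlow hD, mul_nonneg hG hD]
  calc δ ≤ 1 / (2 * μ) * (G * G) := by rwa [← sq]
    _ ≤ 1 / (2 * μ) * (G * (L * D)) := by gcongr
    _ = L / (2 * μ) * (G * D - μ / 2 * D ^ 2) + L / 4 * D ^ 2 := by field_simp; ring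
    _ ≤ t * (G * D - μ / 2 * D ^ 2) + L / 4 * D ^ 2 := by gcongr
    _ = t * (G * D) - (μ * t - L / 2) / 2 * D ^ 2 := by ring

theorem stmt_10_general {E : Type*} [NormedAddCommGroup E] [InnerProductSpace ℝ E]
    [CompleteSpace E] {F : E → ℝ} (hF : Differentiable ℝ F) {L μ a γ : ℝ} (hμ : 0 < μ)
    {xstar : E} (hgrad : ∀ x, ‖gradient F x‖ ≤ L * ‖x - xstar‖)
    (hmin : ∀ x, F xstar ≤ F x) (huniq : ∀ y, (∀ x, F y ≤ F x) → y = xstar)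
    (hPL : ∀ x, F x - F xstar ≤ 1 / (2 * μ) * ‖gradient F x‖ ^ 2)
    (hUAAC : ∀ x, x ≠ xstar → ⟪gradient F x, x - xstar⟫ ≥ a * (‖gradient F x‖ * ‖x - xstar‖))
    (hγ : 0 < γ) (hγL : γ * L ≤ 2 * μ * a) (x : E) :
    F xstar ≥ F x + (1 / γ) * ⟪gradient F x, xstar - x⟫
      + (μ * a / γ - L / 2) / 2 * ‖xstar - x‖ ^ 2 := by
  rcases eq_or_ne x xstar with rfl | hne
  · simp
  have hPL' : PolyakLojasiewicz F (F xstar) μ := fun z => norm_gradient_eq_norm_fderiv F z ▸ hPL z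
  have hargmin : {y | F y = F xstar} = {xstar} :=
    Set.eq_singleton_iff_unique_mem.2 ⟨rfl, fun y hy => huniq y fun z => hy.trans_le (hmin z)⟩
  have hlow : μ * ‖x - xstar‖ ≤ ‖gradient F x‖ := by
    simpa only [hargmin, Metric.infDist_singleton, dist_eq_norm, norm_gradient_eq_norm_fderiv]
      using hPL'.mul_infDist_le_norm_fderiv hF hmin hμ x
  have ht : L / (2 * μ) ≤ a / γ := by
    rw [div_le_div_iff₀ (by positivity) hγ]
    linarith
  have hgap := gap_le_of_linear_growth hμ (norm_nonneg _) hlow (hgrad x) (hPL x) ht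
  have hangle : a / γ * (‖gradient F x‖ * ‖x - xstar‖) ≤ 1 / γ * ⟪gradient F x, x - xstar⟫ := by
    rw [div_mul_eq_mul_div, one_div_mul_eq_div]
    exact div_le_div_of_nonneg_right (hUAAC x hne) hγ.le
  rw [norm_sub_rev xstar x, ← neg_sub x xstar, inner_neg_right, mul_div_assoc]
  linarith

/-- an `L`-smooth, `μ`-Polyak-Łojasiewicz function with a unique
minimizer satisfying the uniform acute angle condition with constant `a` is
`(γ, μa/γ - L/2)`-strongly quasar convex for every `0 < γ < 2μa/L`. -/
theorem stmt_10 {E : Type*} [NormedAddCommGroup E] [InnerProductSpace ℝ E]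
    [FiniteDimensional ℝ E]
    (F : E → ℝ) (hF : Differentiable ℝ F)
    (L μ a : ℝ) (hμ : 0 < μ) (hμL : μ ≤ L) (ha0 : 0 < a) (ha1 : a ≤ 1)
    (hLip : ∀ x y : E, ‖gradient F x - gradient F y‖ ≤ L * ‖x - y‖)
    (xstar : E) (hmin : ∀ x : E, F xstar ≤ F x)
    (huniq : ∀ y : E, (∀ x : E, F y ≤ F x) → y = xstar)
    (hPL : ∀ x : E, F x - F xstar ≤ 1 / (2 * μ) * ‖gradient F x‖ ^ 2)
    (hUAAC : ∀ x : E, x ≠ xstar →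
      ⟪gradient F x, x - xstar⟫ ≥ a * (‖gradient F x‖ * ‖x - xstar‖)) :
    ∀ γ : ℝ, 0 < γ → γ < 2 * μ * a / L →
      ∀ x : E, F xstar ≥ F x + (1 / γ) * ⟪gradient F x, xstar - x⟫
        + (μ * a / γ - L / 2) / 2 * ‖xstar - x‖ ^ 2 := by
  have hgrad_min : gradient F xstar = 0 := gradient_eq_zero_of_isLocalMin (.of_forall hmin)
  have hgrad (x : E) : ‖gradient F x‖ ≤ L * ‖x - xstar‖ := by
    simpa only [hgrad_min, sub_zero] using hLip x xstar
  exact fun γ hγ hγL => stmt_10_general hF hμ hgrad hmin huniq hPL hUAAC hγ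
    ((lt_div_iff₀ (hμ.trans_le hμL)).1 hγL).le
end

section
/- Let F : E → ℝ be (γ,μ)-strongly quasar convex with respect to its minimizer x*, with γ ∈ (0,1] and μ > 0. Then F is γμ/(2−γ)-RSI: for all x, ⟨∇F(x), x − x*⟩ ≥ (γμ/(2−γ))‖x − x*‖². -/
open scoped RealInnerProductSpace

/-!
Along the ray `t ↦ x₀ + t (x - x₀)`, strong quasar convexity of `F` says that
`h t = F (x₀ + t (x - x₀)) - F x₀ - c t²`, with `c = γ μ / (2 (2 - γ)) ‖x - x₀‖²`, satisfies Euler's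
differential inequality `γ h t ≤ t h' t`, so that `h t / t ^ γ` increases. Since `x₀` is a
minimizer, `h t / t ^ γ ≥ -c t ^ (2 - γ)`, which tends to `0` at `0⁺` because `γ < 2`. Hence
`0 ≤ h 1`, which is quadratic growth, and quadratic growth put back into the strong quasar
convexity inequality gives the restricted secant inequality.
-/

section EulerInequality

variable {h h' : ℝ → ℝ} {γ : ℝ}

theorem monotoneOn_mul_rpow_neg_of_mul_le_mul_deriv
    (hderiv : ∀ t, 0 < t → HasDerivAt h (h' t) t) (hle : ∀ t, 0 < t → γ * h t ≤ t * h' t) :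
    MonotoneOn (fun t => h t * t ^ (-γ)) (Set.Ioi 0) := by
  have hderiv_mul : ∀ t, 0 < t → HasDerivAt (fun t => h t * t ^ (-γ))
      (t ^ (-γ - 1) * (t * h' t - γ * h t)) t := by
    intro t ht
    have hpow : t ^ (-γ) = t ^ (-γ - 1) * t := by
      rw [← Real.rpow_add_one ht.ne', sub_add_cancel]
    refine ((hderiv t ht).mul (Real.hasDerivAt_rpow_const (Or.inl ht.ne'))).congr_deriv ?_
    rw [hpow]
    ring
  refine monotoneOn_of_hasDerivWithinAt_nonneg (convex_Ioi 0)
    (fun t ht => (hderiv_mul t ht).continuousAt.continuousWithinAt)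
    (fun t ht => (hderiv_mul t (interior_subset ht)).hasDerivWithinAt) fun t ht => ?_
  have ht : 0 < t := interior_subset ht
  exact mul_nonneg (Real.rpow_nonneg ht.le _) (sub_nonneg.2 (hle t ht))

theorem nonneg_of_mul_le_mul_deriv_of_mul_rpow_le {c p : ℝ} (hp : γ < p)
    (hderiv : ∀ t, 0 < t → HasDerivAt h (h' t) t) (hle : ∀ t, 0 < t → γ * h t ≤ t * h' t)
    (hbound : ∀ t, 0 < t → c * t ^ p ≤ h t) {s : ℝ} (hs : 0 < s) : 0 ≤ h s := by
  have hlower : ∀ t ∈ Set.Ioo 0 s, c * t ^ (p - γ) ≤ h s * s ^ (-γ) := by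
    rintro t ⟨ht, hts⟩
    calc c * t ^ (p - γ) = c * t ^ p * t ^ (-γ) := by
          rw [sub_eq_add_neg, Real.rpow_add ht, mul_assoc]
      _ ≤ h t * t ^ (-γ) := by gcongr; exact hbound t ht
      _ ≤ h s * s ^ (-γ) :=
          monotoneOn_mul_rpow_neg_of_mul_le_mul_deriv hderiv hle ht hs hts.le
  have hlim : Filter.Tendsto (fun t : ℝ => c * t ^ (p - γ)) (nhdsWithin 0 (Set.Ioi 0))
      (nhds 0) := by
    have hcont : ContinuousAt (fun t : ℝ => c * t ^ (p - γ)) 0 :=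
      (Real.continuousAt_rpow_const 0 (p - γ) (Or.inr (sub_pos.2 hp).le)).const_mul c
    simpa [Real.zero_rpow (sub_pos.2 hp).ne'] using hcont.tendsto.mono_left nhdsWithin_le_nhds
  have hmul : 0 ≤ h s * s ^ (-γ) :=
    le_of_tendsto hlim (Filter.eventually_of_mem (Ioo_mem_nhdsGT hs) hlower)
  exact nonneg_of_mul_nonneg_left hmul (Real.rpow_pos_of_pos hs _)

end EulerInequality

section NormedSpace

variable {E : Type*} [NormedAddCommGroup E] [NormedSpace ℝ E]

/-- `(γ, μ)`-strong quasar convexity of a differentiable function `F` with respect to a minimizer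
`x₀`. The Fréchet derivative replaces the pairing with the gradient, so that no inner product is
needed. Meant for `0 < γ`: at `γ = 0` the factor `1 / γ` is the junk value `0`. -/
structure StronglyQuasarConvex_s13 (γ μ : ℝ) (F : E → ℝ) (x₀ : E) : Prop where
  differentiable : Differentiable ℝ F
  le_apply : ∀ x, F x₀ ≤ F x
  add_fderiv_add_le : ∀ x, F x + 1 / γ * fderiv ℝ F x (x₀ - x) + μ / 2 * ‖x₀ - x‖ ^ 2 ≤ F x₀

/-- The restricted secant inequality (`ν`-RSI) for `F` with respect to `x₀`, written with the
Fréchet derivative in place of the gradient. -/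
def RestrictedSecantInequality (ν : ℝ) (F : E → ℝ) (x₀ : E) : Prop :=
  ∀ x, ν * ‖x - x₀‖ ^ 2 ≤ fderiv ℝ F x (x - x₀)

variable {γ μ : ℝ} {F : E → ℝ} {x₀ : E}

theorem StronglyQuasarConvex_s13.mul_sub_add_le_fderiv (hF : StronglyQuasarConvex_s13 γ μ F x₀)
    (hγ : 0 < γ) (x : E) :
    γ * (F x - F x₀) + γ * μ / 2 * ‖x - x₀‖ ^ 2 ≤ fderiv ℝ F x (x - x₀) := by
  have hx := mul_le_mul_of_nonneg_left (hF.add_fderiv_add_le x) hγ.le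
  rw [norm_sub_rev, ← neg_sub x x₀, map_neg, mul_add, mul_add, ← mul_assoc,
    mul_one_div_cancel hγ.ne'] at hx
  linarith

theorem StronglyQuasarConvex_s13.quadratic_growth (hF : StronglyQuasarConvex_s13 γ μ F x₀)
    (hγ₀ : 0 < γ) (hγ₂ : γ < 2) (x : E) :
    γ * μ / (2 * (2 - γ)) * ‖x - x₀‖ ^ 2 ≤ F x - F x₀ := by
  set c := γ * μ / (2 * (2 - γ)) * ‖x - x₀‖ ^ 2 with hc
  let ray : ℝ → E := AffineMap.lineMap x₀ x
  have hray (t : ℝ) : ray t - x₀ = t • (x - x₀) := AffineMap.lineMap_vsub_left x₀ x t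
  have hderiv (t : ℝ) : HasDerivAt (fun t => F (ray t) - F x₀ - c * t ^ 2)
      (fderiv ℝ F (ray t) (x - x₀) - c * (2 * t)) t := by
    have hFray := (hF.differentiable (ray t)).hasFDerivAt.comp_hasDerivAt t
      AffineMap.hasDerivAt_lineMap
    simpa using (hFray.sub_const (F x₀)).fun_sub ((hasDerivAt_pow 2 t).const_mul c)
  have heuler (t : ℝ) : γ * (F (ray t) - F x₀ - c * t ^ 2) ≤
      t * (fderiv ℝ F (ray t) (x - x₀) - c * (2 * t)) := by
    have hquasar := hF.mul_sub_add_le_fderiv hγ₀ (ray t)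
    rw [hray, map_smul, smul_eq_mul, norm_smul, mul_pow, Real.norm_eq_abs, sq_abs] at hquasar
    have hc_mul : (2 - γ) * c = γ * μ / 2 * ‖x - x₀‖ ^ 2 := by
      rw [hc]
      field_simp [(sub_pos.2 hγ₂).ne']
    linear_combination hquasar + t ^ 2 * hc_mul
  have hbound (t : ℝ) : -c * t ^ (2 : ℝ) ≤ F (ray t) - F x₀ - c * t ^ 2 := by
    rw [Real.rpow_two]
    linarith [hF.le_apply (ray t)]
  have hone := nonneg_of_mul_le_mul_deriv_of_mul_rpow_le hγ₂ (fun t _ => hderiv t)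
    (fun t _ => heuler t) (fun t _ => hbound t) one_pos
  simpa [ray] using hone

theorem stmt_13_general (hF : StronglyQuasarConvex_s13 γ μ F x₀) (hγ₀ : 0 < γ) (hγ₂ : γ < 2) :
    RestrictedSecantInequality (γ * μ / (2 - γ)) F x₀ := by
  intro x
  have hne : 2 - γ ≠ 0 := (sub_pos.2 hγ₂).ne'
  calc γ * μ / (2 - γ) * ‖x - x₀‖ ^ 2
      = γ * (γ * μ / (2 * (2 - γ)) * ‖x - x₀‖ ^ 2) + γ * μ / 2 * ‖x - x₀‖ ^ 2 := by
        field_simp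
        ring
    _ ≤ γ * (F x - F x₀) + γ * μ / 2 * ‖x - x₀‖ ^ 2 := by
        gcongr
        exact hF.quadratic_growth hγ₀ hγ₂ x
    _ ≤ fderiv ℝ F x (x - x₀) := hF.mul_sub_add_le_fderiv hγ₀ x

end NormedSpace

/-- a `(γ,μ)`-strongly quasar convex function is
`γμ/(2-γ)`-RSI with respect to its minimizer. -/
theorem stmt_13 {E : Type*} [NormedAddCommGroup E] [InnerProductSpace ℝ E]
    [FiniteDimensional ℝ E]
    (F : E → ℝ) (hF : Differentiable ℝ F)
    (μ γ : ℝ) (hμ : 0 < μ) (hγ0 : 0 < γ) (hγ1 : γ ≤ 1)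
    (xstar : E) (hmin : ∀ x : E, F xstar ≤ F x)
    (hqc : ∀ x : E,
      F xstar ≥ F x + (1 / γ) * ⟪gradient F x, xstar - x⟫ + μ / 2 * ‖xstar - x‖ ^ 2) :
    ∀ x : E, ⟪gradient F x, x - xstar⟫ ≥ γ * μ / (2 - γ) * ‖x - xstar‖ ^ 2 := by
  simp only [inner_gradient_left] at hqc ⊢
  exact stmt_13_general ⟨hF, hmin, hqc⟩ hγ0 (hγ1.trans_lt one_lt_two)
end

section
/- Let F : E → ℝ be (γ,μ)-strongly quasar convex with respect to its minimizer x*, with γ ∈ (0,1] and μ > 0. Then F is μγ²-Polyak-Łojasiewicz: for all x, F(x) − F(x*) ≤ (1/(2γ²μ))‖∇F(x)‖². -/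
open scoped RealInnerProductSpace

theorem norm_apply_le_norm_sq_add_norm_sq {𝕜 E G : Type*} [NontriviallyNormedField 𝕜]
    [SeminormedAddCommGroup E] [NormedSpace 𝕜 E] [SeminormedAddCommGroup G] [NormedSpace 𝕜 G]
    (f : E →L[𝕜] G) (v : E) {μ : ℝ} (hμ : 0 < μ) :
    ‖f v‖ ≤ 1 / (2 * μ) * ‖f‖ ^ 2 + μ / 2 * ‖v‖ ^ 2 := by
  have young : 2 * ‖v‖ * ‖f‖ ≤ μ * ‖v‖ ^ 2 + μ⁻¹ * ‖f‖ ^ 2 := two_mul_le_add_mul_sq hμ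
  calc ‖f v‖ ≤ ‖f‖ * ‖v‖ := f.le_opNorm v
    _ ≤ (μ * ‖v‖ ^ 2 + μ⁻¹ * ‖f‖ ^ 2) / 2 := by linarith
    _ = 1 / (2 * μ) * ‖f‖ ^ 2 + μ / 2 * ‖v‖ ^ 2 := by ring

theorem stmt_15_general {E : Type*} [SeminormedAddCommGroup E] [NormedSpace ℝ E]
    {F : E → ℝ} {F' : E →L[ℝ] ℝ} {x y : E} (hF : HasFDerivAt F F' x)
    {μ γ : ℝ} (hμ : 0 < μ) (hγ : γ ≠ 0)
    (hqc : F y ≥ F x + (1 / γ) * F' (y - x) + μ / 2 * ‖y - x‖ ^ 2) :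
    F x - F y ≤ 1 / (2 * γ ^ 2 * μ) * ‖F'‖ ^ 2 := by
  -- Weight `μ` in Young's inequality is what makes the quadratic term of `hqc` cancel.
  have hslope : -((1 / γ) * F' (y - x)) ≤
      1 / (2 * μ) * ‖(1 / γ) • F'‖ ^ 2 + μ / 2 * ‖y - x‖ ^ 2 :=
    (neg_le_abs _).trans (norm_apply_le_norm_sq_add_norm_sq ((1 / γ) • F') (y - x) hμ)
  calc F x - F y ≤ -((1 / γ) * F' (y - x)) - μ / 2 * ‖y - x‖ ^ 2 := by linarith
    _ ≤ 1 / (2 * μ) * ‖(1 / γ) • F'‖ ^ 2 := by linarith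
    _ = 1 / (2 * γ ^ 2 * μ) * ‖F'‖ ^ 2 := by
      rw [norm_smul, mul_pow, Real.norm_eq_abs, sq_abs]
      field_simp

/-- a `(γ,μ)`-strongly quasar convex function is
`μγ²`-Polyak-Łojasiewicz. -/
theorem stmt_15 {E : Type*} [NormedAddCommGroup E] [InnerProductSpace ℝ E]
    [FiniteDimensional ℝ E]
    (F : E → ℝ) (hF : Differentiable ℝ F)
    (μ γ : ℝ) (hμ : 0 < μ) (hγ0 : 0 < γ) (hγ1 : γ ≤ 1)
    (xstar : E) (hmin : ∀ x : E, F xstar ≤ F x)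
    (hqc : ∀ x : E,
      F xstar ≥ F x + (1 / γ) * ⟪gradient F x, xstar - x⟫ + μ / 2 * ‖xstar - x‖ ^ 2) :
    ∀ x : E, F x - F xstar ≤ 1 / (2 * γ ^ 2 * μ) * ‖gradient F x‖ ^ 2 := by
  intro x
  simpa only [LinearIsometryEquiv.norm_map] using
    stmt_15_general (hF x).hasGradientAt.hasFDerivAt hμ hγ0.ne' (hqc x)
end
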